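/- Let n ≥ 2, let Φ: ℝⁿ → [0,∞) be positively 1-homogeneous and convex, let B be a convex body in ℝⁿ and H a closed half-space with inner normal ν_H such that B ∩ ∂H has nonempty (n−1)-dimensional interior in ∂H. Let b ∈ B \ H and C = 𝒞(b, B ∩ ∂H), C_lat = 𝒞(b, ∂(B ∩ ∂H)). Then ∫_{C_lat} Φ(ν_C) dℋ^{n−1} ≤ ∫_{∂B ∩ H^c} Φ(ν_B) dℋ^{n−1}, where H^c = ℝⁿ \ H. -/

import Mathlib

open MeasureTheory Metric

local notation "⟪" x ", " y "⟫" => @inner ℝ _ _ x y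

/-- The cone `𝒞(p, S)`: union of all segments joining `p` to points of `S`. -/
def coneOver {n : ℕ} (p : EuclideanSpace ℝ (Fin n)) (S : Set (EuclideanSpace ℝ (Fin n))) :
    Set (EuclideanSpace ℝ (Fin n)) :=
  {y | ∃ t ∈ Set.Icc (0 : ℝ) 1, ∃ x ∈ S, y = (1 - t) • p + t • x}

/-- Relative boundary of `E` inside the ambient set `P`. -/
def relBoundary {n : ℕ} (P E : Set (EuclideanSpace ℝ (Fin n))) :
    Set (EuclideanSpace ℝ (Fin n)) :=
  E \ {x | ∃ ε > (0 : ℝ), ball x ε ∩ P ⊆ E}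

/-- `v` is an inner unit normal of the convex set `E` at the boundary point `x`. -/
def IsInnerNormalAt {n : ℕ} (E : Set (EuclideanSpace ℝ (Fin n)))
    (x v : EuclideanSpace ℝ (Fin n)) : Prop :=
  ‖v‖ = 1 ∧ ∀ y ∈ E, 0 ≤ ⟪v, y - x⟫

namespace ConeCap
open Set Filter Topology
open scoped ENNReal NNReal

/-- Orthogonal projection along a unit vector. -/
noncomputable def P {n : ℕ} (p x : EuclideanSpace ℝ (Fin n)) : EuclideanSpace ℝ (Fin n) := x - ⟪p, x⟫ • p

/-- unit-height cylinder over a subset of the hyperplane orthogonal to `w`. -/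
def Cyl {n : ℕ} (w : EuclideanSpace ℝ (Fin n)) (S : Set (EuclideanSpace ℝ (Fin n))) :
    Set (EuclideanSpace ℝ (Fin n)) := {x | P w x ∈ S ∧ ⟪w, x⟫ ∈ Icc (0:ℝ) 1}

/-- The embedding of the coordinate hyperplane. -/
def emb {d : ℕ} (y : EuclideanSpace ℝ (Fin d)) : EuclideanSpace ℝ (Fin (d+1)) :=
  WithLp.toLp 2 (Fin.cons 0 (fun i => y i))

lemma emb_isometry {d : ℕ} : Isometry (emb (d := d)) := by
  apply Isometry.of_dist_eq
  intro x y
  simp [emb, EuclideanSpace.dist_eq, Fin.sum_univ_succ]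

lemma cyl_volume (d : ℕ) : ∃ κ : ℝ≥0∞, κ ≠ 0 ∧ κ ≠ ∞ ∧
    ∀ w : EuclideanSpace ℝ (Fin (d+1)), ‖w‖ = 1 → ∀ S : Set (EuclideanSpace ℝ (Fin (d+1))),
      (∀ x ∈ S, ⟪w, x⟫ = 0) → volume (Cyl w S) = κ * μH[(d:ℝ)] S := by
  have hH : Measure.IsAddHaarMeasure (μH[(d:ℝ)] : Measure (EuclideanSpace ℝ (Fin d))) := by
    simpa using isAddHaarMeasure_hausdorffMeasure (E := EuclideanSpace ℝ (Fin d))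
  have hvol := Measure.isAddLeftInvariant_eq_smul (volume : Measure (EuclideanSpace ℝ (Fin d)))
    μH[(d:ℝ)]
  set k := Measure.addHaarScalarFactor (volume : Measure (EuclideanSpace ℝ (Fin d))) μH[(d:ℝ)]
  have hk : 0 < k := Measure.addHaarScalarFactor_pos_of_isAddHaarMeasure _ _
  refine ⟨k, by exact_mod_cast hk.ne', by simp, ?_⟩
  intro w hw S hS
  obtain ⟨b, hb⟩ := Orthonormal.exists_orthonormalBasis_extension_of_card_eq (𝕜 := ℝ)
    (E := EuclideanSpace ℝ (Fin (d+1))) (ι := Fin (d+1)) (by simp)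
    (v := fun _ => w) (s := {0}) (by
      rw [orthonormal_iff_ite]
      rintro ⟨i, hi⟩ ⟨j, hj⟩
      simp only [mem_singleton_iff] at hi hj
      subst hi; subst hj
      simp [Set.domRestrict, hw])
  have hb0 : b 0 = w := hb 0 rfl
  have h1 : MeasurePreserving b.repr.toHomeomorph.toMeasurableEquiv volume volume :=
    b.repr.measurePreserving
  have h2 := (EuclideanSpace.volume_preserving_symm_measurableEquiv_toLp (Fin (d+1)))
  have h3 := volume_preserving_piFinSuccAbove (fun _ : Fin (d+1) => ℝ) 0
  have h4 := (EuclideanSpace.volume_preserving_symm_measurableEquiv_toLp (Fin d)).symm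
  let S'' : Set (EuclideanSpace ℝ (Fin d)) := {y | b.repr.symm (emb y) ∈ S}
  let S' : Set (Fin d → ℝ) := {y | b.repr.symm (emb (WithLp.toLp 2 y)) ∈ S}
  have e1 : volume S' = volume S'' := by
    rw [← h4.measure_preimage_equiv]
    rfl
  have hin : ∀ x, ⟪w, x⟫ = b.repr x 0 := by
    intro x; rw [b.repr_apply_apply, hb0]
  have e2 : (fun y => b.repr.symm (emb y)) '' S'' = S := by
    ext x
    constructor
    · rintro ⟨y, hy, rfl⟩; exact hy
    · intro hx
      have h0 : b.repr x 0 = 0 := by rw [← hin, hS x hx]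
      have : b.repr.symm (emb (WithLp.toLp 2 (fun i : Fin d => b.repr x i.succ))) = x := by
        rw [LinearIsometryEquiv.symm_apply_eq]
        ext i
        refine Fin.cases ?_ (fun i => ?_) i
        · simp [emb, h0]
        · simp [emb]
      exact ⟨_, by simpa only [S'', mem_ofPred_eq, this] using hx, this⟩
  have e3 : μH[(d:ℝ)] S = μH[(d:ℝ)] S'' := by
    rw [← e2]
    exact (b.repr.symm.isometry.comp emb_isometry).hausdorffMeasure_image (Or.inl (by positivity)) _
  have e4 : volume (Cyl w S) = volume (Icc (0:ℝ) 1 ×ˢ S') := by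
    have := (h1.trans (h2.trans h3)).measure_preimage_equiv (Icc (0:ℝ) 1 ×ˢ S')
    rw [← this]
    congr 1
    ext x
    have hP : b.repr.symm (emb (WithLp.toLp 2 (fun i : Fin d => b.repr x i.succ))) = P w x := by
      rw [LinearIsometryEquiv.symm_apply_eq]
      ext i
      have hbw : b.repr w = EuclideanSpace.single 0 1 := by rw [← hb0]; simp
      refine Fin.cases ?_ (fun i => ?_) i
      · simp [emb, P, hin, hbw]
      · simp [emb, P, hbw]
    simp only [Cyl, mem_ofPred_eq, ← hP, hin]
    exact and_comm
  rw [e4, e3, Measure.volume_eq_prod, Measure.prod_prod, e1, hvol]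
  simp

/-- `A` is `δ`-flat with respect to the direction `v`. -/
def Flat {n : ℕ} (v : EuclideanSpace ℝ (Fin n)) (δ : ℝ≥0) (A : Set (EuclideanSpace ℝ (Fin n))) : Prop :=
  ∀ x ∈ A, ∀ y ∈ A, |⟪v, x - y⟫| ≤ δ * ‖x - y‖

lemma Flat.mono {n : ℕ} {v : EuclideanSpace ℝ (Fin n)} {δ δ' : ℝ≥0}
    {A : Set (EuclideanSpace ℝ (Fin n))} (h : Flat v δ A) (hd : δ ≤ δ') : Flat v δ' A := by
  intro x hx y hy
  refine (h x hx y hy).trans ?_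
  have : (δ:ℝ) ≤ δ' := by exact_mod_cast hd
  gcongr

lemma P_sub {n : ℕ} (p x y : EuclideanSpace ℝ (Fin n)) : P p (x - y) = P p x - P p y := by
  simp only [P, inner_sub_right, sub_smul]; abel

lemma P_add {n : ℕ} (p x y : EuclideanSpace ℝ (Fin n)) : P p (x + y) = P p x + P p y := by
  simp only [P, inner_add_right, add_smul]; abel

lemma P_smul {n : ℕ} (p x : EuclideanSpace ℝ (Fin n)) (r : ℝ) : P p (r • x) = r • P p x := by
  simp only [P, inner_smul_right, smul_sub, smul_smul]

lemma inner_P {n : ℕ} {p : EuclideanSpace ℝ (Fin n)} (hp : ‖p‖ = 1) (x) : ⟪p, P p x⟫ = 0 := by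
  simp [P, inner_sub_right, inner_smul_right, hp]

lemma P_self {n : ℕ} {p : EuclideanSpace ℝ (Fin n)} (hp : ‖p‖ = 1) : P p p = 0 := by
  simp [P, hp]

lemma P_P {n : ℕ} {p : EuclideanSpace ℝ (Fin n)} (hp : ‖p‖ = 1) (x) : P p (P p x) = P p x := by
  conv_lhs => rw [P]
  simp [inner_P hp]

lemma norm_P_le {n : ℕ} {p : EuclideanSpace ℝ (Fin n)} (hp : ‖p‖ = 1) (x) : ‖P p x‖ ≤ ‖x‖ := by
  have h : x = P p x + ⟪p, x⟫ • p := by simp [P]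
  have h2 : ‖x‖ ^ 2 = ‖P p x‖ ^ 2 + ‖⟪p, x⟫ • p‖ ^ 2 := by
    conv_lhs => rw [h]
    rw [@norm_add_sq_real, inner_smul_right, real_inner_comm p (P p x), inner_P hp]
    ring
  nlinarith [sq_nonneg ‖⟪p, x⟫ • p‖, norm_nonneg x, norm_nonneg (P p x)]

lemma continuous_P {n : ℕ} (p : EuclideanSpace ℝ (Fin n)) : Continuous (P p) := by
  unfold P; fun_prop

lemma lipschitz_P {n : ℕ} {p : EuclideanSpace ℝ (Fin n)} (hp : ‖p‖ = 1) : LipschitzWith 1 (P p) := by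
  apply LipschitzWith.of_dist_le_mul
  intro x y
  rw [dist_eq_norm, dist_eq_norm, ← P_sub]
  simpa using norm_P_le hp (x - y)

lemma hausdorff_P_le {d : ℕ} {p : EuclideanSpace ℝ (Fin (d+1))} (hp : ‖p‖ = 1)
    (A : Set (EuclideanSpace ℝ (Fin (d+1)))) : μH[(d:ℝ)] (P p '' A) ≤ μH[(d:ℝ)] A := by
  have := (lipschitz_P hp).hausdorffMeasure_image_le (d := (d:ℝ)) (by positivity) A
  simpa using this

lemma exists_lin {n : ℕ} {p v : EuclideanSpace ℝ (Fin n)} (hv : ‖v‖ = 1) :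
    ∃ M : EuclideanSpace ℝ (Fin n) →L[ℝ] EuclideanSpace ℝ (Fin n), M.det = ⟪p, v⟫ ∧
      ∀ x, M x = P p (P v x) + ⟪v, x⟫ • p := by
  let φ : EuclideanSpace ℝ (Fin n) →ₗ[ℝ] ℝ := innerₗ _ p - ⟪p, v⟫ • innerₗ _ v
  let M := (LinearMap.transvection (innerₗ _ v) (p - v)) ∘ₗ (LinearMap.transvection φ (-v))
  refine ⟨LinearMap.toContinuousLinearMap M, ?_, ?_⟩
  · rw [ContinuousLinearMap.det, LinearMap.coe_toContinuousLinearMap, LinearMap.det_comp,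
      LinearMap.transvection.det, LinearMap.transvection.det]
    simp [φ, inner_sub_right, hv, real_inner_comm]
  · intro x
    simp only [M, LinearMap.coe_toContinuousLinearMap', LinearMap.comp_apply,
      LinearMap.transvection.apply, φ, P, innerₗ_apply_apply, LinearMap.sub_apply,
      LinearMap.smul_apply, inner_add_right, inner_sub_right, inner_smul_right, inner_neg_right,
      real_inner_self_eq_norm_sq, hv, smul_eq_mul]
    module

lemma Flat.norm_le {n : ℕ} {v : EuclideanSpace ℝ (Fin n)} (hv : ‖v‖ = 1) {δ : ℝ≥0}
    {A : Set (EuclideanSpace ℝ (Fin n))} (h : Flat v δ A) {x y} (hx : x ∈ A) (hy : y ∈ A) :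
    (1 - δ) * ‖x - y‖ ≤ ‖P v x - P v y‖ := by
  have h1 := h x hx y hy
  have h2 : x - y = P v (x - y) + ⟪v, x - y⟫ • v := by simp [P]
  have h3 : ‖x - y‖ ≤ ‖P v (x - y)‖ + |⟪v, x - y⟫| := by
    conv_lhs => rw [h2]
    refine (norm_add_le _ _).trans ?_
    simp [norm_smul, hv]
  rw [P_sub] at h3
  linarith

lemma Flat.exists_inv {n : ℕ} {v : EuclideanSpace ℝ (Fin n)} (hv : ‖v‖ = 1) {δ : ℝ≥0}
    (hδ : δ < 1) {A : Set (EuclideanSpace ℝ (Fin n))} (h : Flat v δ A) :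
    ∃ g : EuclideanSpace ℝ (Fin n) → EuclideanSpace ℝ (Fin n), ∀ x ∈ A, g (P v x) = x := by
  have hinj : InjOn (P v) A := by
    intro x hx y hy hxy
    have := h.norm_le hv hx hy
    rw [hxy, sub_self, norm_zero] at this
    have hδ' : (δ:ℝ) < 1 := by exact_mod_cast hδ
    have : ‖x - y‖ ≤ 0 := by
      by_contra hh; push Not at hh; nlinarith
    exact sub_eq_zero.1 (norm_le_zero_iff.1 this)
  by_cases hA : Nonempty (EuclideanSpace ℝ (Fin n))
  · exact ⟨Function.invFunOn (P v) A, fun x hx => hinj.leftInvOn_invFunOn hx⟩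
  · exact (hA ⟨0⟩).elim

lemma exists_approx {n : ℕ} {p v : EuclideanSpace ℝ (Fin n)} (hp : ‖p‖ = 1) (hv : ‖v‖ = 1)
    {M : EuclideanSpace ℝ (Fin n) →L[ℝ] EuclideanSpace ℝ (Fin n)}
    (hM : ∀ x, M x = P p (P v x) + ⟪v, x⟫ • p) {δ : ℝ≥0} (hδ : δ ≤ 1/2)
    {A : Set (EuclideanSpace ℝ (Fin n))} (h : Flat v (δ/2) A) :
    ∃ f, ApproximatesLinearOn f M (Cyl v (P v '' A)) δ ∧
      f '' (Cyl v (P v '' A)) = Cyl p (P p '' A) := by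
  have hδr : (δ:ℝ) ≤ 1/2 := by exact_mod_cast hδ
  obtain ⟨g, hg⟩ := h.exists_inv hv (lt_of_le_of_lt (half_le_self (zero_le : 0 ≤ δ))
    (lt_of_le_of_lt hδ (by norm_num)))
  let f := fun x => P p (g (P v x)) + ⟪v, x⟫ • p
  refine ⟨f, ?_, ?_⟩
  · rintro x ⟨⟨a, ha, hax⟩, -⟩ y ⟨⟨a', ha', hay⟩, -⟩
    have e : f x - f y - M (x - y) = P p (⟪v, a - a'⟫ • v) := by
      simp only [f, hM, ← hax, ← hay, hg a ha, hg a' ha', inner_sub_right, sub_smul, P_sub]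
      have : ∀ z, ⟪v, z⟫ • v = z - P v z := by intro z; simp [P]
      rw [this, this, P_sub, P_sub]
      abel
    rw [e]
    have h1 := h a ha a' ha'
    have h2 := h.norm_le hv ha ha'
    have h3 : ‖P v a - P v a'‖ ≤ ‖x - y‖ := by
      rw [hax, hay, ← P_sub]; exact norm_P_le hv _
    have h4 : ‖P p (⟪v, a - a'⟫ • v)‖ ≤ |⟪v, a - a'⟫| := by
      refine (norm_P_le hp _).trans ?_
      simp [norm_smul, hv]
    refine h4.trans (h1.trans ?_)
    push_cast at h2 ⊢
    have h5 : ‖a - a'‖ ≤ 2 * ‖x - y‖ := by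
      have := norm_nonneg (a - a')
      nlinarith
    have := NNReal.coe_nonneg δ
    nlinarith
  · ext z
    constructor
    · rintro ⟨x, ⟨⟨a, ha, hax⟩, hx2⟩, rfl⟩
      have i1 : ⟪p, f x⟫ = ⟪v, x⟫ := by
        simp [f, inner_add_right, inner_P hp, inner_smul_right, hp]
      refine ⟨⟨a, ha, ?_⟩, by rwa [i1]⟩
      simp [f, P_add, P_P hp, P_smul, P_self hp, ← hax, hg a ha]
    · rintro ⟨⟨a, ha, hax⟩, hx2⟩
      have hin : ⟪v, P v a + ⟪p, z⟫ • v⟫ = ⟪p, z⟫ := by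
        simp [inner_add_right, inner_P hv, inner_smul_right, hv]
      have hPP : P v (P v a + ⟪p, z⟫ • v) = P v a := by
        simp [P_add, P_P hv, P_smul, P_self hv]
      refine ⟨P v a + ⟪p, z⟫ • v, ⟨⟨a, ha, hPP.symm⟩, by rwa [hin]⟩, ?_⟩
      simp only [f, hPP, hg a ha, hin, hax]
      simp [P]

lemma core_upper {d : ℕ} {p v : EuclideanSpace ℝ (Fin (d+1))} (hp : ‖p‖ = 1) (hv : ‖v‖ = 1)
    {m : ℝ≥0} (hm : |⟪p, v⟫| < m) : ∃ δ : ℝ≥0, 0 < δ ∧ ∀ A, Flat v δ A →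
      μH[(d:ℝ)] (P p '' A) ≤ m * μH[(d:ℝ)] A := by
  obtain ⟨κ, hκ0, hκ, hcyl⟩ := cyl_volume d
  obtain ⟨M, hdet, hM⟩ := exists_lin (p := p) hv
  have h1 := addHaar_image_le_mul_of_det_lt volume M (m := m) (by
    rw [hdet]
    rw [← ENNReal.ofReal_coe_nnreal]
    exact (ENNReal.ofReal_lt_ofReal_iff_of_nonneg (abs_nonneg _)).2 hm)
  have h2 : ∀ᶠ δ : ℝ≥0 in 𝓝[>] 0, δ ≤ 1/2 :=
    nhdsWithin_le_nhds (Iic_mem_nhds (by norm_num))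
  obtain ⟨δ, ⟨hδ1, hδ2⟩, hδ0⟩ := ((h1.and h2).and self_mem_nhdsWithin).exists
  have hδ0 : 0 < δ := hδ0
  refine ⟨δ/2, by positivity, fun A hA => ?_⟩
  obtain ⟨f, hf1, hf2⟩ := exists_approx hp hv hM hδ2 hA
  have := hδ1 _ f hf1
  rw [hf2, hcyl p hp _ (by rintro _ ⟨x, _, rfl⟩; exact inner_P hp _),
    hcyl v hv _ (by rintro _ ⟨x, _, rfl⟩; exact inner_P hv _), mul_left_comm,
    ENNReal.mul_le_mul_iff_right hκ0 hκ] at this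
  exact this.trans (mul_le_mul_right (hausdorff_P_le hv A) _)

lemma core_lower {d : ℕ} {p v : EuclideanSpace ℝ (Fin (d+1))} (hp : ‖p‖ = 1) (hv : ‖v‖ = 1)
    {m : ℝ≥0} (hm : m < |⟪p, v⟫|) : ∃ δ : ℝ≥0, 0 < δ ∧ ∀ A, Flat v δ A →
      m * μH[(d:ℝ)] A ≤ μH[(d:ℝ)] (P p '' A) := by
  obtain ⟨κ, hκ0, hκ, hcyl⟩ := cyl_volume d
  obtain ⟨M, hdet, hM⟩ := exists_lin (p := p) hv
  obtain ⟨m', hm1, hm2⟩ := exists_between (show m < ⟨|⟪p, v⟫|, abs_nonneg _⟩ from hm)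
  have h1 := mul_le_addHaar_image_of_lt_det volume M (m := m') (by
    rw [hdet]
    rw [← ENNReal.ofReal_coe_nnreal]
    exact (ENNReal.ofReal_lt_ofReal_iff_of_nonneg (NNReal.coe_nonneg _)).2 hm2)
  have h2 : ∀ᶠ δ : ℝ≥0 in 𝓝[>] 0, δ ≤ 1/2 :=
    nhdsWithin_le_nhds (Iic_mem_nhds (by norm_num))
  have h3 : ∀ᶠ δ : ℝ≥0 in 𝓝[>] 0, m * ((1 - δ)⁻¹) ^ d < m' := by
    apply nhdsWithin_le_nhds
    have : Tendsto (fun δ : ℝ≥0 => m * ((1 - δ)⁻¹) ^ d) (𝓝 0) (𝓝 (m * ((1 - 0)⁻¹) ^ d)) := by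
      refine Tendsto.const_mul _ (Tendsto.pow (Tendsto.inv₀ ?_ (by simp)) _)
      exact (continuous_const.sub continuous_id).tendsto 0
    exact this.eventually_lt_const (by simpa using hm1)
  obtain ⟨δ, ⟨⟨hδ1, hδ2⟩, hδ3⟩, hδ0⟩ := (((h1.and h2).and h3).and self_mem_nhdsWithin).exists
  have hδ0 : 0 < δ := hδ0
  refine ⟨δ/2, by positivity, fun A hA => ?_⟩
  obtain ⟨f, hf1, hf2⟩ := exists_approx hp hv hM hδ2 hA
  have := hδ1 _ f hf1
  rw [hf2, hcyl p hp _ (by rintro _ ⟨x, _, rfl⟩; exact inner_P hp _),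
    hcyl v hv _ (by rintro _ ⟨x, _, rfl⟩; exact inner_P hv _), mul_left_comm,
    ENNReal.mul_le_mul_iff_right hκ0 hκ] at this
  refine le_trans ?_ this
  have hA' : Flat v δ A := hA.mono (half_le_self (zero_le : 0 ≤ δ))
  have hδlt : δ < 1 := lt_of_le_of_lt hδ2 (by norm_num)
  obtain ⟨g, hg⟩ := hA'.exists_inv hv hδlt
  have hlip : LipschitzOnWith (1 - δ)⁻¹ g (P v '' A) := by
    apply LipschitzOnWith.of_dist_le_mul
    rintro _ ⟨x, hx, rfl⟩ _ ⟨y, hy, rfl⟩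
    rw [hg x hx, hg y hy, dist_eq_norm, dist_eq_norm]
    have := hA'.norm_le hv hx hy
    have hpos : (0:ℝ) < 1 - δ := by
      have : (δ:ℝ) < 1 := by exact_mod_cast hδlt
      linarith
    rw [NNReal.coe_inv, NNReal.coe_sub hδlt.le, NNReal.coe_one, inv_mul_eq_div, le_div_iff₀ hpos]
    linarith
  have h5 := hlip.hausdorffMeasure_image_le (d := (d:ℝ)) (by positivity)
  have h6 : g '' (P v '' A) = A := by
    ext z; constructor
    · rintro ⟨_, ⟨x, hx, rfl⟩, rfl⟩; rwa [hg x hx]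
    · intro hz; exact ⟨_, ⟨z, hz, rfl⟩, hg z hz⟩
  rw [h6, ENNReal.rpow_natCast] at h5
  calc (m:ℝ≥0∞) * μH[(d:ℝ)] A ≤ m * (((1 - δ)⁻¹ : ℝ≥0) ^ d * μH[(d:ℝ)] (P v '' A)) := by gcongr
    _ = ((m * ((1 - δ)⁻¹) ^ d : ℝ≥0) : ℝ≥0∞) * μH[(d:ℝ)] (P v '' A) := by
      rw [← mul_assoc]; push_cast; rfl
    _ ≤ _ := by gcongr

lemma flat_of_normals {n : ℕ} {K A : Set (EuclideanSpace ℝ (Fin n))} (hAK : A ⊆ K)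
    {v : EuclideanSpace ℝ (Fin n)} {δ : ℝ≥0}
    (h : ∀ x ∈ A, ∃ w, IsInnerNormalAt K x w ∧ ‖w - v‖ ≤ δ) : Flat v δ A := by
  have key : ∀ x ∈ A, ∀ y ∈ A, -(δ * ‖x - y‖) ≤ ⟪v, x - y⟫ := by
    intro x hx y hy
    obtain ⟨w, hw, hwd⟩ := h y hy
    have h1 := hw.2 x (hAK hx)
    have h2 : ⟪v, x - y⟫ = ⟪w, x - y⟫ - ⟪w - v, x - y⟫ := by rw [inner_sub_left]; ring
    have h3 : ⟪w - v, x - y⟫ ≤ δ * ‖x - y‖ :=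
      (real_inner_le_norm _ _).trans (by gcongr)
    linarith
  intro x hx y hy
  rw [abs_le]
  refine ⟨key x hx y hy, ?_⟩
  have := key y hy x hx
  rw [norm_sub_rev, ← neg_sub x y, inner_neg_right] at this
  linarith

lemma measure_P_lt_top {d : ℕ} {p : EuclideanSpace ℝ (Fin (d+1))} (hp : ‖p‖ = 1)
    {A : Set (EuclideanSpace ℝ (Fin (d+1)))} (hA : Bornology.IsBounded A) :
    μH[(d:ℝ)] (P p '' A) < ∞ := by
  obtain ⟨κ, hκ0, hκ, hcyl⟩ := cyl_volume d
  have h1 := hcyl p hp (P p '' A) (by rintro _ ⟨x, _, rfl⟩; exact inner_P hp _)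
  obtain ⟨R, hR⟩ := hA.exists_norm_le
  have h2 : Cyl p (P p '' A) ⊆ closedBall 0 (R + 1) := by
    rintro x ⟨⟨a, ha, hax⟩, h0, h1⟩
    have : x = P p a + ⟪p, x⟫ • p := by rw [hax]; simp [P]
    rw [mem_closedBall_zero_iff, this]
    refine (norm_add_le _ _).trans (add_le_add ((norm_P_le hp a).trans (hR a ha)) ?_)
    rw [norm_smul, hp, mul_one, Real.norm_eq_abs, abs_of_nonneg h0]
    exact h1
  have h3 : κ * μH[(d:ℝ)] (P p '' A) < ∞ := by
    rw [← h1]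
    exact (measure_mono h2).trans_lt measure_closedBall_lt_top
  by_contra hcon
  rw [not_lt, top_le_iff] at hcon
  rw [hcon, ENNReal.mul_top hκ0] at h3
  exact lt_irrefl _ h3

lemma finite_normals {d : ℕ} {K : Set (EuclideanSpace ℝ (Fin (d+1)))}
    (hK : Bornology.IsBounded K) :
    μH[(d:ℝ)] {x | x ∈ K ∧ ∃ v, IsInnerNormalAt K x v} < ∞ := by
  have h : ∀ v : EuclideanSpace ℝ (Fin (d+1)), v ∈ sphere (0 : EuclideanSpace ℝ (Fin (d+1))) 1 →
      ∃ δ : ℝ≥0, 0 < δ ∧ ∀ A, Flat v δ A →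
      ((1/2 : ℝ≥0) : ℝ≥0∞) * μH[(d:ℝ)] A ≤ μH[(d:ℝ)] (P v '' A) := by
    intro v hv
    have hv : ‖v‖ = 1 := by simpa using hv
    refine core_lower hv hv ?_
    rw [real_inner_self_eq_norm_sq, hv]
    norm_num
  choose! δ hδ0 hδ using h
  obtain ⟨t, hts, ht⟩ := (isCompact_sphere (0 : EuclideanSpace ℝ (Fin (d+1))) 1).elim_nhds_subcover
    (fun v => ball v (δ v)) (fun v hv => ball_mem_nhds v (by exact_mod_cast hδ0 v hv))
  have hsub : {x | x ∈ K ∧ ∃ v, IsInnerNormalAt K x v} ⊆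
      ⋃ v ∈ t, {x | x ∈ K ∧ ∃ w, IsInnerNormalAt K x w ∧ w ∈ ball v (δ v)} := by
    rintro x ⟨hx, w, hw⟩
    have := ht (show w ∈ sphere (0 : EuclideanSpace ℝ (Fin (d+1))) 1 by simpa using hw.1)
    simp only [mem_iUnion] at this ⊢
    obtain ⟨v, hv, hwv⟩ := this
    exact ⟨v, hv, hx, w, hw, hwv⟩
  refine (measure_mono hsub).trans_lt ?_
  refine (measure_biUnion_lt_top t.finite_toSet ?_)
  intro v hv
  have hvs := hts v hv
  have hv1 : ‖v‖ = 1 := by simpa using hvs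
  set A := {x | x ∈ K ∧ ∃ w, IsInnerNormalAt K x w ∧ w ∈ ball v (δ v)}
  have hAK : A ⊆ K := fun x hx => hx.1
  have hflat : Flat v (δ v) A := flat_of_normals hAK (by
    rintro x ⟨_, w, hw, hwv⟩
    exact ⟨w, hw, by rw [mem_ball, dist_eq_norm] at hwv; exact hwv.le⟩)
  have h1 := hδ v hvs A hflat
  have h2 := h1.trans_lt (measure_P_lt_top hv1 (hK.subset hAK))
  by_contra hcon
  rw [not_lt, top_le_iff] at hcon
  rw [hcon, ENNReal.mul_top (by simp)] at h2
  exact lt_irrefl _ h2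

lemma nonunique_null {d : ℕ} {K : Set (EuclideanSpace ℝ (Fin (d+1)))}
    (hK : Bornology.IsBounded K)
    (hflat : ∀ v : EuclideanSpace ℝ (Fin (d+1)), ‖v‖ = 1 →
      (∀ y ∈ K, ∀ z ∈ K, ⟪v, y - z⟫ = 0) → False) :
    μH[(d:ℝ)] {x | x ∈ K ∧ ∃ v w, IsInnerNormalAt K x v ∧ IsInnerNormalAt K x w ∧ v ≠ w} = 0 := by
  let s : Set (EuclideanSpace ℝ (Fin (d+1)) × EuclideanSpace ℝ (Fin (d+1))) :=
    {q | ‖q.1‖ = 1 ∧ ‖q.2‖ = 1 ∧ q.1 ≠ q.2 ∧ q.1 ≠ - q.2}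
  have h : ∀ q ∈ s, ∃ δ : ℝ≥0, 0 < δ ∧ μH[(d:ℝ)] {x | x ∈ K ∧ ∃ v w, IsInnerNormalAt K x v ∧
      IsInnerNormalAt K x w ∧ (v, w) ∈ ball q δ} = 0 := by
    rintro ⟨v, w⟩ ⟨hv, hw, hne, hne'⟩
    dsimp only at hv hw hne hne'
    have hlt : |⟪v, w⟫| < 1 := by
      rw [abs_lt]
      constructor
      · by_contra hcon
        push Not at hcon
        apply hne'
        have h1 : ‖v + w‖ ^ 2 ≤ 0 := by
          rw [@norm_add_sq_real, hv, hw]; linarith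
        have h2 : v + w = 0 := by
          rw [← norm_eq_zero]; nlinarith [norm_nonneg (v + w)]
        exact eq_neg_of_add_eq_zero_left h2
      · by_contra hcon
        push Not at hcon
        apply hne
        have h1 : ‖v - w‖ ^ 2 ≤ 0 := by
          rw [@norm_sub_sq_real, hv, hw]; linarith
        have h2 : v - w = 0 := by
          rw [← norm_eq_zero]; nlinarith [norm_nonneg (v - w)]
        exact sub_eq_zero.1 h2
    obtain ⟨m, hm1, hm2⟩ := exists_between hlt
    obtain ⟨m', hm1', hm2'⟩ := exists_between hm2
    have hm0 : 0 ≤ m := (abs_nonneg _).trans hm1.le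
    have hm0' : 0 ≤ m' := hm0.trans hm1'.le
    lift m to ℝ≥0 using hm0
    lift m' to ℝ≥0 using hm0'
    obtain ⟨δ1, hδ1, h1⟩ := core_upper (m := m) hv hw hm1
    obtain ⟨δ2, hδ2, h2⟩ := core_lower (m := m') hv hv (by
      rw [real_inner_self_eq_norm_sq, hv]; simpa using hm2')
    refine ⟨min δ1 δ2, lt_min hδ1 hδ2, ?_⟩
    set A := {x | x ∈ K ∧ ∃ v' w', IsInnerNormalAt K x v' ∧
      IsInnerNormalAt K x w' ∧ (v', w') ∈ ball (v, w) (min δ1 δ2 : ℝ≥0)}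
    have hAK : A ⊆ K := fun x hx => hx.1
    have f1 : Flat w δ1 A := flat_of_normals hAK (by
      rintro x ⟨_, v', w', hv', hw', hq⟩
      refine ⟨w', hw', ?_⟩
      rw [mem_ball, Prod.dist_eq, max_lt_iff, dist_eq_norm, dist_eq_norm] at hq
      exact hq.2.le.trans (by exact_mod_cast min_le_left _ _))
    have f2 : Flat v δ2 A := flat_of_normals hAK (by
      rintro x ⟨_, v', w', hv', hw', hq⟩
      refine ⟨v', hv', ?_⟩
      rw [mem_ball, Prod.dist_eq, max_lt_iff, dist_eq_norm, dist_eq_norm] at hq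
      exact hq.1.le.trans (by exact_mod_cast min_le_right _ _))
    have g1 := h1 A f1
    have g2 := h2 A f2
    have hfin : μH[(d:ℝ)] A < ∞ := by
      refine (measure_mono ?_).trans_lt (finite_normals hK)
      rintro x ⟨hx, v', w', hv', -⟩
      exact ⟨hx, v', hv'⟩
    by_contra h0
    have := (ENNReal.mul_le_mul_iff_left h0 hfin.ne).1 (g2.trans g1)
    have h3 : m' ≤ m := by exact_mod_cast this
    exact absurd hm1' (not_lt.2 (by exact_mod_cast h3))
  choose! δ hδ0 hδ using h
  obtain ⟨t, hts, htc, ht⟩ := TopologicalSpace.countable_cover_nhdsWithin (s := s)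
    (f := fun q => ball q (δ q))
    (fun q hq => mem_nhdsWithin_of_mem_nhds (ball_mem_nhds q (by exact_mod_cast hδ0 q hq)))
  refine measure_mono_null (t := ⋃ q ∈ t, {x | x ∈ K ∧ ∃ v w, IsInnerNormalAt K x v ∧
      IsInnerNormalAt K x w ∧ (v, w) ∈ ball q (δ q)}) ?_
    ((measure_biUnion_null_iff htc).2 (fun q hq => hδ q (hts hq)))
  rintro x ⟨hx, v, w, hv, hw, hne⟩
  have hq : (v, w) ∈ s := by
    refine ⟨hv.1, hw.1, hne, ?_⟩
    intro heq
    dsimp only at heq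
    have hz : ∀ y ∈ K, ⟪w, y - x⟫ = 0 := by
      intro y hy
      have a1 := hv.2 y hy
      have a2 := hw.2 y hy
      rw [heq, inner_neg_left] at a1
      linarith
    refine hflat w hw.1 (fun y hy z hz' => ?_)
    have := hz y hy
    have h' := hz z hz'
    rw [inner_sub_right] at *
    linarith
  have := ht hq
  simp only [mem_iUnion] at this ⊢
  obtain ⟨q, hq, hb⟩ := this
  exact ⟨q, hq, hx, v, w, hv, hw, hb⟩

/-- A good set of boundary points, with unique measurable normal. -/
structure Good {d : ℕ} (K G : Set (EuclideanSpace ℝ (Fin (d+1))))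
    (ν : EuclideanSpace ℝ (Fin (d+1)) → EuclideanSpace ℝ (Fin (d+1))) : Prop where
  meas : MeasurableSet G
  sub : G ⊆ frontier K
  subK : G ⊆ K
  measν : Measurable ν
  normal : ∀ x ∈ G, IsInnerNormalAt K x (ν x)
  uniq : ∀ x ∈ G, ∀ v, IsInnerNormalAt K x v → v = ν x
  fin : μH[(d:ℝ)] G < ∞

lemma exists_good {d : ℕ} {K : Set (EuclideanSpace ℝ (Fin (d+1)))}
    (hKc : IsCompact K)
    (hflat : ∀ v : EuclideanSpace ℝ (Fin (d+1)), ‖v‖ = 1 →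
      (∀ y ∈ K, ∀ z ∈ K, ⟪v, y - z⟫ = 0) → False)
    (ν : EuclideanSpace ℝ (Fin (d+1)) → EuclideanSpace ℝ (Fin (d+1)))
    (hν : ∀ᵐ x ∂(μH[(d:ℝ)].restrict (frontier K)), IsInnerNormalAt K x (ν x)) :
    ∃ G ν', Good K G ν' ∧ (∀ x ∈ G, ν' x = ν x) ∧ μH[(d:ℝ)] (frontier K \ G) = 0 := by
  have hfm : MeasurableSet (frontier K) := isClosed_frontier.measurableSet
  have hfK : frontier K ⊆ K := hKc.isClosed.frontier_subset
  rw [ae_restrict_iff' hfm] at hν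
  have hN1 : μH[(d:ℝ)] {x | ¬ (x ∈ frontier K → IsInnerNormalAt K x (ν x))} = 0 := hν
  have hN2 := nonunique_null hKc.isBounded hflat
  set N := {x | ¬ (x ∈ frontier K → IsInnerNormalAt K x (ν x))} ∪
    {x | x ∈ K ∧ ∃ v w, IsInnerNormalAt K x v ∧ IsInnerNormalAt K x w ∧ v ≠ w} with hNdef
  have hN : μH[(d:ℝ)] N = 0 := measure_union_null hN1 hN2
  set N' := toMeasurable (μH[(d:ℝ)]) N
  have hN' : μH[(d:ℝ)] N' = 0 := by rw [measure_toMeasurable, hN]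
  have hNN' : N ⊆ N' := subset_toMeasurable _ _
  set G := frontier K \ N'
  have hGm : MeasurableSet G := hfm.diff (measurableSet_toMeasurable _ _)
  have hnorm : ∀ x ∈ G, IsInnerNormalAt K x (ν x) := by
    intro x hx
    by_contra hcon
    exact hx.2 (hNN' (Or.inl (fun h => hcon (h hx.1))))
  have huniq : ∀ x ∈ G, ∀ v, IsInnerNormalAt K x v → v = ν x := by
    intro x hx v hv
    by_contra hcon
    exact hx.2 (hNN' (Or.inr ⟨hfK hx.1, v, ν x, hv, hnorm x hx, hcon⟩))
  have hcont : ContinuousOn ν G := by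
    intro x hx
    refine (isCompact_sphere (0 : EuclideanSpace ℝ (Fin (d+1))) 1).le_nhds_of_unique_clusterPt
      (l := map ν (𝓝[G] x)) ?_ ?_
    · rw [mem_map]
      filter_upwards [self_mem_nhdsWithin] with y hy
      simpa using (hnorm y hy).1
    · intro u hu hcl
      apply huniq x hx
      refine ⟨by simpa using hu, fun y hy => ?_⟩
      obtain ⟨F, hF, hFt⟩ := mapClusterPt_iff_ultrafilter.1 hcl
      have hFx : Tendsto (fun z => z) (F : Filter _) (𝓝 x) := hF.trans nhdsWithin_le_nhds
      have hFG : ∀ᶠ z in (F : Filter _), z ∈ G := hF self_mem_nhdsWithin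
      have ht : Tendsto (fun z => ⟪ν z, y - z⟫) (F : Filter _) (𝓝 ⟪u, y - x⟫) :=
        hFt.inner (tendsto_const_nhds.sub hFx)
      exact ge_of_tendsto ht (hFG.mono fun z hz => (hnorm z hz).2 y hy)
  refine ⟨G, G.indicator ν, ⟨hGm, sdiff_subset, sdiff_subset.trans hfK, ?_, ?_, ?_, ?_⟩, ?_, ?_⟩
  · classical
    have := hcont.measurable_piecewise (g := 0) continuousOn_const hGm
    rwa [Set.piecewise_eq_indicator] at this
  · intro x hx; rw [indicator_of_mem hx]; exact hnorm x hx
  · intro x hx v hv; rw [indicator_of_mem hx]; exact huniq x hx v hv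
  · exact lt_of_le_of_lt (measure_mono (show G ⊆ {x | x ∈ K ∧ ∃ v, IsInnerNormalAt K x v} from
      fun x hx => ⟨hfK hx.1, ν x, hnorm x hx⟩))
      (finite_normals hKc.isBounded)
  · intro x hx; exact indicator_of_mem hx _
  · refine measure_mono_null ?_ hN'
    rintro x ⟨hx, hxG⟩
    by_contra hcon
    exact hxG ⟨hx, hcon⟩

lemma induct_pieces {n : ℕ} {ν : EuclideanSpace ℝ (Fin n) → EuclideanSpace ℝ (Fin n)}
    (hν : Measurable ν) (U : EuclideanSpace ℝ (Fin n) → Set (EuclideanSpace ℝ (Fin n)))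
    (hU : ∀ v, MeasurableSet (U v)) (A₀ : Set (EuclideanSpace ℝ (Fin n)))
    (Q : Set (EuclideanSpace ℝ (Fin n)) → Prop) (h0 : Q ∅)
    (hun : ∀ A₁ A₂, MeasurableSet A₁ → MeasurableSet A₂ → A₁ ⊆ A₀ → A₂ ⊆ A₀ → Disjoint A₁ A₂ →
      Q A₁ → Q A₂ → Q (A₁ ∪ A₂))
    (s : Set (EuclideanSpace ℝ (Fin n)))
    (hloc : ∀ v ∈ s, ∀ A, MeasurableSet A → A ⊆ A₀ → (∀ x ∈ A, ν x ∈ U v) → Q A)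
    (t : Finset (EuclideanSpace ℝ (Fin n))) (hts : ∀ v ∈ t, v ∈ s) :
    ∀ A, MeasurableSet A → A ⊆ A₀ → (∀ x ∈ A, ν x ∈ ⋃ v ∈ t, U v) → Q A := by
  classical
  induction t using Finset.induction_on with
  | empty =>
    intro A hA hA0 h
    have : A = ∅ := by
      ext x
      constructor
      · intro hx; simpa using h x hx
      · intro hx; exact hx.elim
    rw [this]; exact h0
  | insert v t hv ih =>
    intro A hA hA0 h
    have e : A = (A ∩ ν ⁻¹' (U v)) ∪ (A \ ν ⁻¹' (U v)) := (inter_union_sdiff _ _).symm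
    rw [e]
    have m1 : MeasurableSet (ν ⁻¹' (U v)) := hν (hU v)
    refine hun _ _ (hA.inter m1) (hA.diff m1) (inter_subset_left.trans hA0)
      (sdiff_subset.trans hA0) ?_ ?_ ?_
    · exact disjoint_sdiff_inter.symm
    · exact hloc v (hts v (Finset.mem_insert_self _ _)) _ (hA.inter m1)
        (inter_subset_left.trans hA0) (fun x hx => hx.2)
    · refine ih (fun w hw => hts w (Finset.mem_insert_of_mem hw)) _ (hA.diff m1)
        (sdiff_subset.trans hA0) (fun x hx => ?_)
      have := h x hx.1
      simp only [Finset.mem_insert, iUnion_iUnion_eq_or_left, mem_union] at this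
      exact this.resolve_left hx.2

lemma Good.flat {d : ℕ} {K G : Set (EuclideanSpace ℝ (Fin (d+1)))} {ν}
    (hG : Good K G ν) {A} (hA : A ⊆ G) {v} {δ : ℝ≥0} (h : ∀ x ∈ A, ν x ∈ ball v δ) :
    Flat v δ A :=
  flat_of_normals (hA.trans hG.subK) (fun x hx => ⟨ν x, hG.normal x (hA hx), by
    have := h x hx
    rw [mem_ball, dist_eq_norm] at this
    exact this.le⟩)

lemma area_upper {d : ℕ} {K G : Set (EuclideanSpace ℝ (Fin (d+1)))} {ν}
    (hG : Good K G ν) {p : EuclideanSpace ℝ (Fin (d+1))} (hp : ‖p‖ = 1) {A} (hA : MeasurableSet A)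
    (hAG : A ⊆ G) : μH[(d:ℝ)] (P p '' A) ≤ ∫⁻ x in A, ENNReal.ofReal |⟪p, ν x⟫| ∂μH[(d:ℝ)] := by
  have hfin : μH[(d:ℝ)] A < ∞ := (measure_mono hAG).trans_lt hG.fin
  have step : ∀ ε : ℝ, 0 < ε → μH[(d:ℝ)] (P p '' A) ≤
      ∫⁻ x in A, ENNReal.ofReal (|⟪p, ν x⟫| + 2 * ε) ∂μH[(d:ℝ)] := by
    intro ε hε
    have h : ∀ v : EuclideanSpace ℝ (Fin (d+1)), v ∈ sphere (0 : EuclideanSpace ℝ (Fin (d+1))) 1 →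
        ∃ δ : ℝ≥0, 0 < δ ∧ δ ≤ ε ∧ ∀ A, Flat v δ A →
        μH[(d:ℝ)] (P p '' A) ≤ ENNReal.ofReal (|⟪p, v⟫| + ε) * μH[(d:ℝ)] A := by
      intro v hv
      have hv : ‖v‖ = 1 := by simpa using hv
      obtain ⟨δ, hδ0, hδ⟩ := core_upper (m := (|⟪p, v⟫| + ε).toNNReal) hp hv (by
        rw [Real.coe_toNNReal _ (by positivity)]; linarith)
      refine ⟨min δ ε.toNNReal, lt_min hδ0 (by simpa using hε), ?_, fun A hA =>
        hδ A (hA.mono (min_le_left _ _))⟩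
      calc ((min δ ε.toNNReal : ℝ≥0) : ℝ) ≤ (ε.toNNReal : ℝ) := by
            exact_mod_cast min_le_right _ _
        _ = ε := Real.coe_toNNReal _ hε.le
    choose! δ hδ0 hδε hδ using h
    obtain ⟨t, hts, ht⟩ := (isCompact_sphere (0 : EuclideanSpace ℝ (Fin (d+1))) 1).elim_nhds_subcover
      (fun v => ball v (δ v)) (fun v hv => ball_mem_nhds v (by exact_mod_cast hδ0 v hv))
    refine induct_pieces hG.measν (fun v => ball v (δ v)) (fun v => measurableSet_ball) A
      (fun A => μH[(d:ℝ)] (P p '' A) ≤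
        ∫⁻ x in A, ENNReal.ofReal (|⟪p, ν x⟫| + 2 * ε) ∂μH[(d:ℝ)]) (by simp) ?_ _ ?_ t hts A hA
      subset_rfl (fun x hx => ht (by simpa using (hG.normal x (hAG hx)).1))
    · intro A₁ A₂ h₁ h₂ _ _ hd i₁ i₂
      rw [image_union, lintegral_union h₂ hd]
      exact (measure_union_le _ _).trans (add_le_add i₁ i₂)
    · intro v hv A' hA' hA'A hx
      refine (hδ v hv A' (hG.flat (hA'A.trans hAG) hx)).trans ?_
      rw [← setLIntegral_const]
      refine setLIntegral_mono' hA' (fun x hxA => ENNReal.ofReal_le_ofReal ?_)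
      have h1 := hx x hxA
      rw [mem_ball, dist_eq_norm] at h1
      have h2 : |⟪p, v⟫ - ⟪p, ν x⟫| ≤ ε := by
        rw [← inner_sub_right]
        refine (abs_real_inner_le_norm _ _).trans ?_
        rw [hp, one_mul, norm_sub_rev]
        exact h1.le.trans (hδε v hv)
      have := abs_sub_abs_le_abs_sub ⟪p, v⟫ ⟪p, ν x⟫
      linarith
  apply ENNReal.le_of_forall_pos_le_add
  intro η hη _
  set M := (μH[(d:ℝ)] A).toReal with hM
  have hM0 : 0 ≤ M := ENNReal.toReal_nonneg
  have hηr : (0:ℝ) < η := by exact_mod_cast hη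
  have hε : 0 < (η:ℝ) / (2 * (M + 1)) := by positivity
  refine (step _ hε).trans ?_
  calc ∫⁻ x in A, ENNReal.ofReal (|⟪p, ν x⟫| + 2 * (η / (2 * (M + 1)))) ∂μH[(d:ℝ)]
      ≤ ∫⁻ x in A, (ENNReal.ofReal |⟪p, ν x⟫| + ENNReal.ofReal (η / (M + 1))) ∂μH[(d:ℝ)] := by
        refine lintegral_mono (fun x => ?_)
        rw [← ENNReal.ofReal_add (abs_nonneg _) (by positivity)]
        apply ENNReal.ofReal_le_ofReal
        apply le_of_eq
        field_simp
    _ = ∫⁻ x in A, ENNReal.ofReal |⟪p, ν x⟫| ∂μH[(d:ℝ)] + ENNReal.ofReal (η / (M + 1)) * μH[(d:ℝ)] A := by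
        rw [lintegral_add_right _ measurable_const, setLIntegral_const]
    _ ≤ _ := by
        gcongr
        rw [← ENNReal.ofReal_toReal hfin.ne, ← hM, ← ENNReal.ofReal_mul (by positivity),
          ← ENNReal.ofReal_coe_nnreal]
        apply ENNReal.ofReal_le_ofReal
        rw [div_mul_eq_mul_div, div_le_iff₀ (by positivity)]
        nlinarith

lemma area_lower {d : ℕ} {K G : Set (EuclideanSpace ℝ (Fin (d+1)))} {ν}
    (hG : Good K G ν) {p : EuclideanSpace ℝ (Fin (d+1))} (hp : ‖p‖ = 1) {A} (hA : MeasurableSet A)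
    (hAG : A ⊆ G) (hinj : InjOn (P p) A) :
    ∫⁻ x in A, ENNReal.ofReal ⟪p, ν x⟫ ∂μH[(d:ℝ)] ≤ μH[(d:ℝ)] (P p '' A) := by
  have hfin : μH[(d:ℝ)] A < ∞ := (measure_mono hAG).trans_lt hG.fin
  have step : ∀ ε : ℝ, 0 < ε → 
      ∫⁻ x in A, ENNReal.ofReal (⟪p, ν x⟫ - 2 * ε) ∂μH[(d:ℝ)] ≤ μH[(d:ℝ)] (P p '' A) := by
    intro ε hε
    have h : ∀ v : EuclideanSpace ℝ (Fin (d+1)), v ∈ sphere (0 : EuclideanSpace ℝ (Fin (d+1))) 1 →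
        ∃ δ : ℝ≥0, 0 < δ ∧ δ ≤ ε ∧ ∀ A, Flat v δ A →
        ENNReal.ofReal (|⟪p, v⟫| - ε) * μH[(d:ℝ)] A ≤ μH[(d:ℝ)] (P p '' A) := by
      intro v hv
      have hv : ‖v‖ = 1 := by simpa using hv
      rcases le_or_gt |⟪p, v⟫| ε with hle | hgt
      · refine ⟨ε.toNNReal, by simpa using hε, (Real.coe_toNNReal _ hε.le).le, fun A _ => ?_⟩
        rw [ENNReal.ofReal_of_nonpos (by linarith), zero_mul]
        exact zero_le
      obtain ⟨δ, hδ0, hδ⟩ := core_lower (m := (|⟪p, v⟫| - ε).toNNReal) hp hv (by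
        rw [Real.coe_toNNReal _ (by linarith)]; linarith)
      refine ⟨min δ ε.toNNReal, lt_min hδ0 (by simpa using hε), ?_, fun A hA =>
        hδ A (hA.mono (min_le_left _ _))⟩
      calc ((min δ ε.toNNReal : ℝ≥0) : ℝ) ≤ (ε.toNNReal : ℝ) := by
            exact_mod_cast min_le_right _ _
        _ = ε := Real.coe_toNNReal _ hε.le
    choose! δ hδ0 hδε hδ using h
    obtain ⟨t, hts, ht⟩ := (isCompact_sphere (0 : EuclideanSpace ℝ (Fin (d+1))) 1).elim_nhds_subcover
      (fun v => ball v (δ v)) (fun v hv => ball_mem_nhds v (by exact_mod_cast hδ0 v hv))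
    refine induct_pieces hG.measν (fun v => ball v (δ v)) (fun v => measurableSet_ball) A
      (fun A => ∫⁻ x in A, ENNReal.ofReal (⟪p, ν x⟫ - 2 * ε) ∂μH[(d:ℝ)] ≤ μH[(d:ℝ)] (P p '' A))
      (by simp) ?_ _ ?_ t hts A hA
      subset_rfl (fun x hx => ht (by simpa using (hG.normal x (hAG hx)).1))
    · intro A₁ A₂ h₁ h₂ s₁ s₂ hd i₁ i₂
      rw [image_union, lintegral_union h₂ hd, measure_union]
      · exact add_le_add i₁ i₂
      · rw [disjoint_left]
        rintro _ ⟨x, hx, rfl⟩ ⟨y, hy, hxy⟩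
        have hxy' := hinj (s₂ hy) (s₁ hx) hxy
        subst hxy'
        exact disjoint_left.1 hd hx hy
      · exact h₂.image_of_continuousOn_injOn (continuous_P p).continuousOn (hinj.mono s₂)
    · intro v hv A' hA' hA'A hx
      refine le_trans ?_ (hδ v hv A' (hG.flat (hA'A.trans hAG) hx))
      rw [← setLIntegral_const]
      refine setLIntegral_mono' hA' (fun x hxA => ENNReal.ofReal_le_ofReal ?_)
      have h1 := hx x hxA
      rw [mem_ball, dist_eq_norm] at h1
      have h2 : |⟪p, ν x⟫ - ⟪p, v⟫| ≤ ε := by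
        rw [← inner_sub_right]
        refine (abs_real_inner_le_norm _ _).trans ?_
        rw [hp, one_mul]
        exact h1.le.trans (hδε v hv)
      have := (abs_le.1 h2).2
      have := le_abs_self ⟪p, v⟫
      linarith
  apply ENNReal.le_of_forall_pos_le_add
  intro η hη _
  set M := (μH[(d:ℝ)] A).toReal with hM
  have hM0 : 0 ≤ M := ENNReal.toReal_nonneg
  have hηr : (0:ℝ) < η := by exact_mod_cast hη
  have hε : 0 < (η:ℝ) / (2 * (M + 1)) := by positivity
  calc ∫⁻ x in A, ENNReal.ofReal ⟪p, ν x⟫ ∂μH[(d:ℝ)]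
      ≤ ∫⁻ x in A, (ENNReal.ofReal (⟪p, ν x⟫ - 2 * (η / (2 * (M + 1)))) +
          ENNReal.ofReal (η / (M + 1))) ∂μH[(d:ℝ)] := by
        refine lintegral_mono (fun x => ?_)
        refine le_trans ?_ ENNReal.ofReal_add_le
        apply ENNReal.ofReal_le_ofReal
        apply le_of_eq
        field_simp
        ring
    _ = ∫⁻ x in A, ENNReal.ofReal (⟪p, ν x⟫ - 2 * (η / (2 * (M + 1)))) ∂μH[(d:ℝ)]
        + ENNReal.ofReal (η / (M + 1)) * μH[(d:ℝ)] A := by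
        rw [lintegral_add_right _ measurable_const, setLIntegral_const]
    _ ≤ _ := by
        refine add_le_add (step _ hε) ?_
        rw [← ENNReal.ofReal_toReal hfin.ne, ← hM, ← ENNReal.ofReal_mul (by positivity),
          ← ENNReal.ofReal_coe_nnreal]
        apply ENNReal.ofReal_le_ofReal
        rw [div_mul_eq_mul_div, div_le_iff₀ (by positivity)]
        nlinarith

lemma exists_subgradient {n : ℕ} {Φ : EuclideanSpace ℝ (Fin n) → ℝ}
    (hΦ0 : ∀ x, 0 ≤ Φ x)
    (hΦhom : ∀ l : ℝ, 0 < l → ∀ x, Φ (l • x) = l * Φ x)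
    (hΦconv : ConvexOn ℝ Set.univ Φ) (v : EuclideanSpace ℝ (Fin n)) (hv : v ≠ 0) :
    ∃ p : EuclideanSpace ℝ (Fin n), (∀ x, ⟪p, x⟫ ≤ Φ x) ∧ ⟪p, v⟫ = Φ v := by
  have hadd : ∀ x y, Φ (x + y) ≤ Φ x + Φ y := by
    intro x y
    have h1 := hΦconv.2 (mem_univ x) (mem_univ y) (show (0:ℝ) ≤ 1/2 by norm_num)
      (show (0:ℝ) ≤ 1/2 by norm_num) (by norm_num)
    rw [← smul_add, hΦhom _ (by norm_num)] at h1
    simp only [smul_eq_mul] at h1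
    linarith
  obtain ⟨g, hg1, hg2⟩ := exists_extension_of_le_sublinear
    (LinearPMap.mkSpanSingleton v (Φ v) hv) Φ hΦhom hadd (by
      rintro ⟨x, hx⟩
      obtain ⟨t, rfl⟩ := Submodule.mem_span_singleton.1 hx
      rw [LinearPMap.mkSpanSingleton'_apply]
      simp only [smul_eq_mul, RingHom.id_apply]
      rcases lt_or_ge 0 t with ht | ht
      · rw [hΦhom t ht]
      · nlinarith [hΦ0 v, hΦ0 (t • v)])
  refine ⟨(InnerProductSpace.toDual ℝ _).symm (LinearMap.toContinuousLinearMap g), ?_, ?_⟩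
  · intro x
    rw [InnerProductSpace.toDual_symm_apply]
    exact hg2 x
  · rw [InnerProductSpace.toDual_symm_apply]
    have := hg1 ⟨v, Submodule.mem_span_singleton_self v⟩
    have h2 := LinearPMap.mkSpanSingleton_apply (σ := RingHom.id ℝ) ℝ ℝ hv (Φ v)
    exact this.trans h2

lemma exists_finite_minorants {n : ℕ} {Φ : EuclideanSpace ℝ (Fin n) → ℝ}
    (hΦ0 : ∀ x, 0 ≤ Φ x)
    (hΦhom : ∀ l : ℝ, 0 < l → ∀ x, Φ (l • x) = l * Φ x)
    (hΦconv : ConvexOn ℝ Set.univ Φ) {ε : ℝ} (hε : 0 < ε) :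
    ∃ (N : ℕ) (p : Fin N → EuclideanSpace ℝ (Fin n)), (∀ i x, ⟪p i, x⟫ ≤ Φ x) ∧
      ∀ v, ‖v‖ = 1 → ∃ i, Φ v ≤ ⟪p i, v⟫ + ε := by
  have hcont : Continuous Φ := by
    rw [← continuousOn_univ]
    exact hΦconv.continuousOn isOpen_univ
  have h : ∀ v ∈ sphere (0 : EuclideanSpace ℝ (Fin n)) 1,
      ∃ p : EuclideanSpace ℝ (Fin n), (∀ x, ⟪p, x⟫ ≤ Φ x) ∧ ⟪p, v⟫ = Φ v := by
    intro v hv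
    apply exists_subgradient hΦ0 hΦhom hΦconv
    rintro rfl
    simp at hv
  choose! p hp1 hp2 using h
  obtain ⟨t, hts, ht⟩ := (isCompact_sphere (0 : EuclideanSpace ℝ (Fin n)) 1).elim_nhds_subcover
    (fun v => {w | Φ w < ⟪p v, w⟫ + ε}) (fun v hv => by
      apply (isOpen_lt hcont (by fun_prop)).mem_nhds
      rw [mem_ofPred_eq, hp2 v hv]
      linarith)
  refine ⟨t.card, fun i => p (t.equivFin.symm i), fun i x => hp1 _ (hts _ (t.equivFin.symm i).2) x, ?_⟩
  intro v hv
  have := ht (show v ∈ sphere (0 : EuclideanSpace ℝ (Fin n)) 1 by simpa using hv)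
  simp only [mem_iUnion] at this
  obtain ⟨w, hw, hvw⟩ := this
  refine ⟨t.equivFin ⟨w, hw⟩, ?_⟩
  simp only [Equiv.symm_apply_apply]
  exact le_of_lt hvw

/-- The situation of the theorem after discarding null sets. -/
structure Setup {d : ℕ} (B C GB GC : Set (EuclideanSpace ℝ (Fin (d+1))))
    (νB νC : EuclideanSpace ℝ (Fin (d+1)) → EuclideanSpace ℝ (Fin (d+1)))
    (w : EuclideanSpace ℝ (Fin (d+1))) (c : ℝ) : Prop where
  cpt : IsCompact B
  conv : Convex ℝ B
  sub : C ⊆ B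
  gB : Good B GB νB
  gC : Good C GC νC
  null : μH[(d:ℝ)] (frontier B \ GB) = 0
  sec : ∀ z ∈ B, ⟪w, z⟫ = c → z ∈ C

/-- The region where the `i`-th linear function is the first maximal one. -/
def Reg {d N : ℕ} (GC : Set (EuclideanSpace ℝ (Fin (d+1))))
    (νC : EuclideanSpace ℝ (Fin (d+1)) → EuclideanSpace ℝ (Fin (d+1)))
    (w : EuclideanSpace ℝ (Fin (d+1))) (c : ℝ) (p : Fin N → EuclideanSpace ℝ (Fin (d+1)))
    (i : Fin N) : Set (EuclideanSpace ℝ (Fin (d+1))) :=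
  {x | (x ∈ GC ∧ ⟪w, x⟫ < c) ∧ 0 < ⟪p i, νC x⟫ ∧ (∀ j, ⟪p j, νC x⟫ ≤ ⟪p i, νC x⟫) ∧
    ∀ j, j < i → ⟪p j, νC x⟫ < ⟪p i, νC x⟫}

/-- The points of `∂B` reached from the `i`-th region. -/
def Img {d N : ℕ} (GB GC : Set (EuclideanSpace ℝ (Fin (d+1))))
    (νC : EuclideanSpace ℝ (Fin (d+1)) → EuclideanSpace ℝ (Fin (d+1)))
    (w : EuclideanSpace ℝ (Fin (d+1))) (c : ℝ) (p : Fin N → EuclideanSpace ℝ (Fin (d+1)))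
    (i : Fin N) : Set (EuclideanSpace ℝ (Fin (d+1))) :=
  (fun q : EuclideanSpace ℝ (Fin (d+1)) × ℝ => q.1 - q.2 • p i) ''
    {q | q.1 ∈ Reg GC νC w c p i ∧ 0 ≤ q.2 ∧ q.1 - q.2 • p i ∈ GB}

section
variable {d N : ℕ} {B C GB GC : Set (EuclideanSpace ℝ (Fin (d+1)))}
    {νB νC : EuclideanSpace ℝ (Fin (d+1)) → EuclideanSpace ℝ (Fin (d+1))}
    {w : EuclideanSpace ℝ (Fin (d+1))} {c : ℝ} {p : Fin N → EuclideanSpace ℝ (Fin (d+1))}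

lemma Setup.aux (h : Setup B C GB GC νB νC w c) {i j : Fin N} {x y : EuclideanSpace ℝ (Fin (d+1))}
    {s t : ℝ} (hx : x ∈ Reg GC νC w c p i) (hy : y ∈ Reg GC νC w c p j)
    (ht : 0 ≤ t) (he : x - s • p i = y - t • p j) :
    s * ⟪p i, νC x⟫ ≤ t * ⟪p j, νC x⟫ ∧ s ≤ t := by
  have h1 := (h.gC.normal x hx.1.1).2 y (h.gC.subK hy.1.1)
  have h2 : y - x = t • p j - s • p i := by
    have : y = x - s • p i + t • p j := by rw [he]; abel
    rw [this]; abel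
  rw [h2, inner_sub_right, inner_smul_right, inner_smul_right, real_inner_comm (p j),
    real_inner_comm (p i)] at h1
  have h3 := hx.2.2.1 j
  have h4 := hx.2.1
  refine ⟨by linarith, ?_⟩
  by_contra hcon
  push Not at hcon
  nlinarith

lemma Setup.inj (h : Setup B C GB GC νB νC w c) {i j : Fin N} {x y : EuclideanSpace ℝ (Fin (d+1))}
    {s t : ℝ} (hx : x ∈ Reg GC νC w c p i) (hy : y ∈ Reg GC νC w c p j)
    (hs : 0 ≤ s) (ht : 0 ≤ t) (he : x - s • p i = y - t • p j) : i = j ∧ s = t ∧ x = y := by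
  have a1 := h.aux hx hy ht he
  have a2 := h.aux hy hx hs he.symm
  have hst : s = t := le_antisymm a1.2 a2.2
  subst hst
  have key : ⟪p i, νC x⟫ ≤ ⟪p j, νC x⟫ ∧ ⟪p j, νC y⟫ ≤ ⟪p i, νC y⟫ := by
    rcases hs.eq_or_lt with h0 | h0
    · have hxy : x = y := by simpa [← h0] using he
      subst hxy
      exact ⟨hy.2.2.1 i, hx.2.2.1 j⟩
    · exact ⟨le_of_mul_le_mul_left a1.1 h0, le_of_mul_le_mul_left a2.1 h0⟩
  have hij : i = j := by
    rcases lt_trichotomy i j with hlt | heq | hlt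
    · exact absurd (hy.2.2.2 i hlt) (not_lt.2 key.2)
    · exact heq
    · exact absurd (hx.2.2.2 j hlt) (not_lt.2 key.1)
  subst hij
  exact ⟨rfl, rfl, by simpa using he⟩

lemma Setup.height (h : Setup B C GB GC νB νC w c) {i : Fin N} {x : EuclideanSpace ℝ (Fin (d+1))}
    {s : ℝ} (hx : x ∈ Reg GC νC w c p i) (hs : 0 ≤ s) (hz : x - s • p i ∈ B) :
    ⟪w, x - s • p i⟫ < c := by
  by_contra hcon
  push Not at hcon
  have hxc := hx.1.2
  have hxB := h.sub (h.gC.subK hx.1.1)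
  rw [inner_sub_right, inner_smul_right] at hcon
  set α := ⟪w, x⟫
  set β := s * ⟪w, p i⟫
  have hβ : 0 < α - β - α := by linarith
  let r := (c - α) / (α - β - α)
  have hr0 : 0 < r := div_pos (by linarith) hβ
  have hr1 : r ≤ 1 := (div_le_one hβ).2 (by linarith)
  have hmem : x - (r * s) • p i ∈ B := by
    have := h.conv hxB hz (a := 1 - r) (b := r) (by linarith) hr0.le (by ring)
    convert this using 1
    module
  have hc : ⟪w, x - (r * s) • p i⟫ = c := by
    rw [inner_sub_right, inner_smul_right]
    have : r * (α - β - α) = c - α := div_mul_cancel₀ _ hβ.ne'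
    change α - r * s * ⟪w, p i⟫ = c
    have e : r * s * ⟪w, p i⟫ = r * β := by simp only [β]; ring
    rw [e]; linarith
  have hC := h.sec _ hmem hc
  have h1 := (h.gC.normal x hx.1.1).2 _ hC
  have e : x - (r * s) • p i - x = -((r * s) • p i) := by abel
  rw [e, inner_neg_right, inner_smul_right, real_inner_comm] at h1
  have hs0 : 0 < s := by
    rcases hs.eq_or_lt with h0 | h0
    · exfalso; simp only [β, ← h0] at hβ; linarith
    · exact h0
  have := mul_pos (mul_pos hr0 hs0) hx.2.1
  linarith

lemma Setup.reg_meas (h : Setup B C GB GC νB νC w c) (i : Fin N) :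
    MeasurableSet (Reg GC νC w c p i) := by
  have hν := h.gC.measν
  have hj : ∀ j, Measurable fun x => ⟪p j, νC x⟫ := fun j => measurable_const.inner hν
  refine MeasurableSet.inter (h.gC.meas.inter ?_) (MeasurableSet.inter ?_ (MeasurableSet.inter ?_ ?_))
  · show MeasurableSet {x | ⟪w, x⟫ < c}
    exact (isOpen_lt (by fun_prop) continuous_const).measurableSet
  · exact measurableSet_lt measurable_const (hj i)
  · show MeasurableSet {x | ∀ j, ⟪p j, νC x⟫ ≤ ⟪p i, νC x⟫}
    rw [ofPred_forall]
    exact MeasurableSet.iInter (fun j => measurableSet_le (hj j) (hj i))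
  · show MeasurableSet {x | ∀ j, j < i → ⟪p j, νC x⟫ < ⟪p i, νC x⟫}
    simp only [ofPred_forall]
    exact MeasurableSet.iInter (fun j => MeasurableSet.iInter fun _ => measurableSet_lt (hj j) (hj i))

lemma Setup.img_meas (h : Setup B C GB GC νB νC w c) (i : Fin N) :
    MeasurableSet (Img GB GC νC w c p i) := by
  have hc : Continuous (fun q : EuclideanSpace ℝ (Fin (d+1)) × ℝ => q.1 - q.2 • p i) := by fun_prop
  refine MeasurableSet.image_of_continuousOn_injOn ?_ hc.continuousOn ?_
  · refine MeasurableSet.inter (measurable_fst (h.reg_meas i)) (MeasurableSet.inter ?_ ?_)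
    · exact measurableSet_le measurable_const measurable_snd
    · exact hc.measurable h.gB.meas
  · rintro ⟨x, s⟩ ⟨hx, hs, _⟩ ⟨y, t⟩ ⟨hy, ht, _⟩ he
    obtain ⟨-, h1, h2⟩ := h.inj hx hy hs ht he
    exact Prod.ext h2 h1

lemma Setup.img_disj (h : Setup B C GB GC νB νC w c) :
    Pairwise (Function.onFun Disjoint (Img GB GC νC w c p)) := by
  intro i j hij
  rw [Function.onFun, disjoint_left]
  rintro _ ⟨⟨x, s⟩, ⟨hx, hs, _⟩, rfl⟩ ⟨⟨y, t⟩, ⟨hy, ht, _⟩, he⟩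
  exact hij (h.inj hy hx ht hs he).1.symm

lemma exists_exit (hB : IsCompact B) {x q : EuclideanSpace ℝ (Fin (d+1))} (hx : x ∈ B)
    (hq : q ≠ 0) : ∃ s : ℝ, 0 ≤ s ∧ x - s • q ∈ frontier B := by
  have hcont : Continuous (fun s : ℝ => x - s • q) := by fun_prop
  set T : Set ℝ := {s | 0 ≤ s ∧ x - s • q ∈ B}
  have hTclosed : IsClosed T := (isClosed_le continuous_const continuous_id).inter
    (hB.isClosed.preimage hcont)
  have hTb : BddAbove T := by
    obtain ⟨R, hR⟩ := hB.isBounded.exists_norm_le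
    refine ⟨(R + ‖x‖) / ‖q‖, ?_⟩
    rintro s ⟨hs, hsB⟩
    rw [le_div_iff₀ (norm_pos_iff.2 hq)]
    have h1 := hR _ hsB
    have h2 : ‖s • q‖ ≤ ‖x - s • q‖ + ‖x‖ := by
      have : s • q = x - (x - s • q) := by abel
      calc ‖s • q‖ = ‖x - (x - s • q)‖ := by rw [← this]
        _ ≤ _ := (norm_sub_le _ _).trans (le_of_eq (add_comm _ _))
    rw [norm_smul, Real.norm_eq_abs, abs_of_nonneg hs] at h2
    linarith
  have hTn : T.Nonempty := ⟨0, le_rfl, by simpa using hx⟩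
  have hmem := hTclosed.csSup_mem hTn hTb
  refine ⟨sSup T, hmem.1, subset_closure hmem.2, fun hzI => ?_⟩
  have hnh : ∀ᶠ s in 𝓝 (sSup T), x - s • q ∈ interior B :=
    hcont.continuousAt.eventually (isOpen_interior.mem_nhds hzI)
  have hnh' : ∀ᶠ s in 𝓝[>] (sSup T), x - s • q ∈ interior B := hnh.filter_mono nhdsWithin_le_nhds
  obtain ⟨s, hs1, hs2⟩ := (hnh'.and self_mem_nhdsWithin).exists
  have hs2 : sSup T < s := hs2
  have : s ≤ sSup T := le_csSup hTb ⟨hmem.1.trans hs2.le, interior_subset hs1⟩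
  linarith

lemma Setup.piece (h : Setup B C GB GC νB νC w c) {Φ : EuclideanSpace ℝ (Fin (d+1)) → ℝ}
    (i : Fin N) (hp : ∀ x, ⟪p i, x⟫ ≤ Φ x) :
    ∫⁻ x in Reg GC νC w c p i, ENNReal.ofReal ⟪p i, νC x⟫ ∂μH[(d:ℝ)] ≤
    ∫⁻ x in Img GB GC νC w c p i, ENNReal.ofReal (Φ (νB x)) ∂μH[(d:ℝ)] := by
  set A := Reg GC νC w c p i
  set W := Img GB GC νC w c p i
  have hAm : MeasurableSet A := h.reg_meas i
  have hWm : MeasurableSet W := h.img_meas i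
  by_cases hp0 : p i = 0
  · have : A = ∅ := by
      ext x
      refine ⟨fun hx => ?_, fun hx => hx.elim⟩
      have := hx.2.1
      rw [hp0, inner_zero_left] at this
      exact (lt_irrefl _ this).elim
    rw [this]; simp
  have hn : 0 < ‖p i‖ := norm_pos_iff.2 hp0
  set q := ‖p i‖⁻¹ • p i with hq
  have hq1 : ‖q‖ = 1 := by rw [hq, norm_smul, norm_inv, norm_norm, inv_mul_cancel₀ hn.ne']
  have hpq : p i = ‖p i‖ • q := by rw [hq, smul_smul, mul_inv_cancel₀ hn.ne', one_smul]
  have hAG : A ⊆ GC := fun x hx => hx.1.1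
  have hWG : W ⊆ GB := by rintro _ ⟨q, hq, rfl⟩; exact hq.2.2
  have hinj : InjOn (P q) A := by
    have main : ∀ x ∈ A, ∀ y ∈ A, P q x = P q y → 0 ≤ ⟪q, x - y⟫ → x = y := by
      intro x hx y hy hxy h0
      have hs : 0 ≤ ⟪q, x - y⟫ / ‖p i‖ := by positivity
      refine (h.inj hx hy hs le_rfl ?_).2.2
      have h1 : (⟪q, x - y⟫ / ‖p i‖) • p i = ⟪q, x - y⟫ • q := by
        rw [hq, smul_smul, div_eq_mul_inv]
      rw [h1, inner_sub_right, sub_smul, zero_smul, sub_zero]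
      unfold P at hxy
      calc x - (⟪q, x⟫ • q - ⟪q, y⟫ • q) = (x - ⟪q, x⟫ • q) + ⟪q, y⟫ • q := by abel
        _ = y := by rw [hxy]; abel
    intro x hx y hy hxy
    rcases le_total 0 ⟪q, x - y⟫ with h0 | h0
    · exact main x hx y hy hxy h0
    · refine (main y hy x hx hxy.symm ?_).symm
      rw [← neg_sub, inner_neg_right]; linarith
  have h1 := area_lower h.gC hq1 hAm hAG hinj
  have h2 := area_upper h.gB hq1 hWm hWG
  have h3 : μH[(d:ℝ)] (P q '' A) ≤ μH[(d:ℝ)] (P q '' W) := by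
    have hsub : P q '' A ⊆ P q '' W ∪ P q '' (frontier B \ GB) := by
      rintro _ ⟨x, hx, rfl⟩
      obtain ⟨s, hs, hz⟩ := exists_exit h.cpt (h.sub (h.gC.subK (hAG hx))) hp0
      have hPz : P q (x - s • p i) = P q x := by
        rw [P_sub, P_smul, hpq, P_smul, P_self hq1]; simp
      by_cases hzG : x - s • p i ∈ GB
      · exact Or.inl ⟨_, ⟨(x, s), ⟨hx, hs, hzG⟩, rfl⟩, hPz⟩
      · exact Or.inr ⟨_, ⟨hz, hzG⟩, hPz⟩
    refine (measure_mono hsub).trans ((measure_union_le _ _).trans ?_)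
    have : μH[(d:ℝ)] (P q '' (frontier B \ GB)) = 0 :=
      le_antisymm ((hausdorff_P_le hq1 _).trans h.null.le) zero_le
    rw [this, add_zero]
  have hCm := h.gC.measν
  have hBm := h.gB.measν
  calc ∫⁻ x in A, ENNReal.ofReal ⟪p i, νC x⟫ ∂μH[(d:ℝ)]
      = ENNReal.ofReal ‖p i‖ * ∫⁻ x in A, ENNReal.ofReal ⟪q, νC x⟫ ∂μH[(d:ℝ)] := by
        rw [← lintegral_const_mul _ ((measurable_const.inner hCm).ennreal_ofReal)]
        refine lintegral_congr fun x => ?_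
        rw [← ENNReal.ofReal_mul hn.le]
        conv_lhs => rw [hpq, real_inner_smul_left]
    _ ≤ ENNReal.ofReal ‖p i‖ * ∫⁻ x in W, ENNReal.ofReal |⟪q, νB x⟫| ∂μH[(d:ℝ)] :=
        mul_le_mul_right (h1.trans (h3.trans h2)) _
    _ = ∫⁻ x in W, ENNReal.ofReal |⟪p i, νB x⟫| ∂μH[(d:ℝ)] := by
        rw [← lintegral_const_mul _ ((measurable_const.inner hBm).abs.ennreal_ofReal)]
        refine lintegral_congr fun x => ?_
        rw [← ENNReal.ofReal_mul hn.le]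
        conv_rhs => rw [hpq, real_inner_smul_left, abs_mul, abs_norm]
    _ ≤ _ := by
        refine setLIntegral_mono' hWm (fun z hz => ENNReal.ofReal_le_ofReal ?_)
        obtain ⟨⟨x, s⟩, ⟨hx, hs, hzG⟩, rfl⟩ := hz
        dsimp only at hx hs hzG ⊢
        have hnz := h.gB.normal _ hzG
        have hpos : 0 ≤ ⟪p i, νB (x - s • p i)⟫ := by
          rcases hs.eq_or_lt with h0 | h0
          · rw [← h0, zero_smul, sub_zero] at hnz ⊢
            have := h.gC.uniq x hx.1.1 _ ⟨hnz.1, fun y hy => hnz.2 y (h.sub hy)⟩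
            rw [this]
            exact hx.2.1.le
          · have h5 := hnz.2 x (h.sub (h.gC.subK hx.1.1))
            rw [sub_sub_cancel, inner_smul_right, real_inner_comm] at h5
            exact nonneg_of_mul_nonneg_right h5 h0
        rw [abs_of_nonneg hpos]
        exact hp _

end

section
variable {d : ℕ} {B C GB GC : Set (EuclideanSpace ℝ (Fin (d+1)))}
    {νB νC : EuclideanSpace ℝ (Fin (d+1)) → EuclideanSpace ℝ (Fin (d+1))}
    {w : EuclideanSpace ℝ (Fin (d+1))} {c : ℝ}

lemma Setup.pointwise {N : ℕ} {p : Fin N → EuclideanSpace ℝ (Fin (d+1))}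
    (h : Setup B C GB GC νB νC w c) {Φ : EuclideanSpace ℝ (Fin (d+1)) → ℝ} {ε : ℝ} (hε : 0 < ε)
    (hp : ∀ v, ‖v‖ = 1 → ∃ i, Φ v ≤ ⟪p i, v⟫ + ε) {x : EuclideanSpace ℝ (Fin (d+1))}
    (hx : x ∈ GC ∧ ⟪w, x⟫ < c) :
    ENNReal.ofReal (Φ (νC x)) ≤
      (∑ i, (Reg GC νC w c p i).indicator (fun x => ENNReal.ofReal ⟪p i, νC x⟫) x) +
        ENNReal.ofReal ε := by
  obtain ⟨i₀, hi₀⟩ := hp _ (h.gC.normal x hx.1).1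
  haveI : Nonempty (Fin N) := ⟨i₀⟩
  obtain ⟨m, -, hm⟩ := Finset.exists_max_image Finset.univ (fun i => ⟪p i, νC x⟫)
    ⟨i₀, Finset.mem_univ _⟩
  rcases le_or_gt ⟪p m, νC x⟫ 0 with h0 | h0
  · refine le_trans (ENNReal.ofReal_le_ofReal ?_) le_add_self
    have := hm i₀ (Finset.mem_univ _)
    linarith
  · have hne : (Finset.univ.filter (fun i : Fin N => ∀ j, ⟪p j, νC x⟫ ≤ ⟪p i, νC x⟫)).Nonempty :=
      ⟨m, by simpa using fun j => hm j (Finset.mem_univ _)⟩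
    obtain ⟨k, hk⟩ : ∃ k, k = Finset.min' _ hne := ⟨_, rfl⟩
    have hkm := Finset.min'_mem _ hne
    rw [← hk, Finset.mem_filter] at hkm
    have hkR : x ∈ Reg GC νC w c p k := by
      refine ⟨hx, h0.trans_le (hkm.2 m), hkm.2, fun j hj => ?_⟩
      by_contra hcon
      push Not at hcon
      have : k ≤ j := by
        rw [hk]
        apply Finset.min'_le
        simpa using fun l => (hkm.2 l).trans hcon
      exact absurd hj (not_lt.2 this)
    have h1 : ENNReal.ofReal (Φ (νC x)) ≤ ENNReal.ofReal ⟪p k, νC x⟫ + ENNReal.ofReal ε := by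
      rw [← ENNReal.ofReal_add (h0.trans_le (hkm.2 m)).le hε.le]
      apply ENNReal.ofReal_le_ofReal
      have := hkm.2 i₀
      linarith
    refine h1.trans (add_le_add_left ?_ _)
    have h2 := Finset.single_le_sum
      (f := fun i => (Reg GC νC w c p i).indicator (fun x => ENNReal.ofReal ⟪p i, νC x⟫) x)
      (fun i _ => zero_le) (Finset.mem_univ k)
    refine le_trans ?_ h2
    simp only [indicator_of_mem hkR, le_refl]

lemma Setup.main (h : Setup B C GB GC νB νC w c) {Φ : EuclideanSpace ℝ (Fin (d+1)) → ℝ}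
    (hΦ0 : ∀ x, 0 ≤ Φ x)
    (hΦhom : ∀ l : ℝ, 0 < l → ∀ x, Φ (l • x) = l * Φ x)
    (hΦconv : ConvexOn ℝ Set.univ Φ) :
    ∫⁻ x in GC ∩ {x | ⟪w, x⟫ < c}, ENNReal.ofReal (Φ (νC x)) ∂μH[(d:ℝ)] ≤
    ∫⁻ x in GB ∩ {x | ⟪w, x⟫ < c}, ENNReal.ofReal (Φ (νB x)) ∂μH[(d:ℝ)] := by
  have hDm : MeasurableSet (GC ∩ {x | ⟪w, x⟫ < c}) :=
    h.gC.meas.inter (isOpen_lt (by fun_prop) continuous_const).measurableSet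
  have step : ∀ ε : ℝ, 0 < ε →
      ∫⁻ x in GC ∩ {x | ⟪w, x⟫ < c}, ENNReal.ofReal (Φ (νC x)) ∂μH[(d:ℝ)] ≤
      ∫⁻ x in GB ∩ {x | ⟪w, x⟫ < c}, ENNReal.ofReal (Φ (νB x)) ∂μH[(d:ℝ)]
        + ENNReal.ofReal ε * μH[(d:ℝ)] GC := by
    intro ε hε
    obtain ⟨N, p, hp1, hp2⟩ := exists_finite_minorants hΦ0 hΦhom hΦconv hε
    have hm : ∀ i, Measurable fun x => ENNReal.ofReal ⟪p i, νC x⟫ := fun i =>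
      (measurable_const.inner h.gC.measν).ennreal_ofReal
    calc ∫⁻ x in GC ∩ {x | ⟪w, x⟫ < c}, ENNReal.ofReal (Φ (νC x)) ∂μH[(d:ℝ)]
        ≤ ∫⁻ x in GC ∩ {x | ⟪w, x⟫ < c}, ((∑ i, (Reg GC νC w c p i).indicator
            (fun x => ENNReal.ofReal ⟪p i, νC x⟫) x) + ENNReal.ofReal ε) ∂μH[(d:ℝ)] :=
          setLIntegral_mono' hDm (fun x hx => h.pointwise hε hp2 hx)
      _ = ∑ i, ∫⁻ x in GC ∩ {x | ⟪w, x⟫ < c}, (Reg GC νC w c p i).indicator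
            (fun x => ENNReal.ofReal ⟪p i, νC x⟫) x ∂μH[(d:ℝ)] +
            ENNReal.ofReal ε * μH[(d:ℝ)] (GC ∩ {x | ⟪w, x⟫ < c}) := by
          rw [lintegral_add_right _ measurable_const, lintegral_finset_sum, setLIntegral_const]
          exact fun i _ => (hm i).indicator (h.reg_meas i)
      _ ≤ ∑ i, ∫⁻ x in Reg GC νC w c p i, ENNReal.ofReal ⟪p i, νC x⟫ ∂μH[(d:ℝ)] +
            ENNReal.ofReal ε * μH[(d:ℝ)] GC := by
          refine add_le_add (Finset.sum_le_sum fun i _ => ?_)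
            (mul_le_mul_right (measure_mono inter_subset_left) _)
          rw [← lintegral_indicator (h.reg_meas i)]
          exact setLIntegral_le_lintegral _ _
      _ ≤ ∑ i, ∫⁻ x in Img GB GC νC w c p i, ENNReal.ofReal (Φ (νB x)) ∂μH[(d:ℝ)] +
            ENNReal.ofReal ε * μH[(d:ℝ)] GC := by
          exact add_le_add_left (Finset.sum_le_sum fun i _ => h.piece i (hp1 i)) _
      _ = ∫⁻ x in ⋃ i, Img GB GC νC w c p i, ENNReal.ofReal (Φ (νB x)) ∂μH[(d:ℝ)] +
            ENNReal.ofReal ε * μH[(d:ℝ)] GC := by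
          rw [lintegral_iUnion h.img_meas h.img_disj, tsum_fintype]
      _ ≤ _ := by
          refine add_le_add_left (lintegral_mono_set ?_) _
          refine iUnion_subset fun i => ?_
          rintro _ ⟨⟨x, s⟩, ⟨hx, hs, hz⟩, rfl⟩
          exact ⟨hz, h.height hx hs (h.gB.subK hz)⟩
  refine ENNReal.le_of_forall_pos_le_add fun η hη _ => ?_
  by_cases hz : μH[(d:ℝ)] GC = 0
  · have := step 1 one_pos
    rw [hz, mul_zero, add_zero] at this
    exact this.trans le_self_add
  have hfin := h.gC.fin
  have hpos : 0 < (μH[(d:ℝ)] GC).toReal := ENNReal.toReal_pos hz hfin.ne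
  refine (step (η / (μH[(d:ℝ)] GC).toReal) (by positivity)).trans (add_le_add_right ?_ _)
  rw [ENNReal.ofReal_div_of_pos hpos, ENNReal.ofReal_toReal hfin.ne, ENNReal.ofReal_coe_nnreal]
  exact (ENNReal.div_mul_cancel hz hfin.ne).le

end

section
variable {d : ℕ} {B : Set (EuclideanSpace ℝ (Fin (d+1)))}
    {w b : EuclideanSpace ℝ (Fin (d+1))} {c : ℝ}

lemma P_add_smul {y : EuclideanSpace ℝ (Fin (d+1))} (hy : ⟪w, y⟫ = c) : P w y + c • w = y := by
  simp [P, hy]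

lemma relBd_null (hw : ‖w‖ = 1) (hB : Convex ℝ B) :
    μH[(d:ℝ)] (relBoundary {x : EuclideanSpace ℝ (Fin (d+1)) | ⟪w, x⟫ = c}
      (B ∩ {x : EuclideanSpace ℝ (Fin (d+1)) | ⟪w, x⟫ = c})) = 0 := by
  set R := relBoundary {x : EuclideanSpace ℝ (Fin (d+1)) | ⟪w, x⟫ = c}
      (B ∩ {x : EuclideanSpace ℝ (Fin (d+1)) | ⟪w, x⟫ = c})
  obtain ⟨κ, hκ0, -, hκ⟩ := cyl_volume d
  set Q : Set (EuclideanSpace ℝ (Fin (d+1))) := {x | P w x + c • w ∈ B}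
  have hQ : Convex ℝ Q := by
    intro x hx y hy s t hs ht hst
    have := hB hx hy hs ht hst
    show P w (s • x + t • y) + c • w ∈ B
    convert this using 1
    rw [P_add, P_smul, P_smul]
    have e : c • w = (s + t) • (c • w) := by rw [hst, one_smul]
    conv_lhs => rw [e]
    module
  have hsub : Cyl w (P w '' R) ⊆ frontier Q := by
    rintro x ⟨⟨y, ⟨⟨hyB, hyH⟩, hyR⟩, hyx⟩, -⟩
    have hyH : ⟪w, y⟫ = c := hyH
    refine ⟨subset_closure ?_, fun hzI => hyR ?_⟩
    · show P w x + c • w ∈ B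
      rw [← hyx, P_add_smul hyH]
      exact hyB
    · obtain ⟨ε, hε, hball⟩ := Metric.mem_nhds_iff.1 (mem_interior_iff_mem_nhds.1 hzI)
      refine ⟨ε, hε, ?_⟩
      rintro z ⟨hz, hzH⟩
      have hzH' : ⟪w, z⟫ = c := hzH
      refine ⟨?_, hzH⟩
      have h1 : x + (z - y) ∈ Q := by
        apply hball
        rw [mem_ball, dist_eq_norm] at hz ⊢
        simpa using hz
      have h2 : P w (x + (z - y)) + c • w ∈ B := h1
      rw [P_add, P_sub, ← hyx, add_sub_cancel, P_add_smul hzH'] at h2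
      exact h2
  have h0 : volume (Cyl w (P w '' R)) = 0 := measure_mono_null hsub (hQ.addHaar_frontier volume)
  rw [hκ w hw _ (by rintro _ ⟨y, -, rfl⟩; exact inner_P hw y)] at h0
  have h1 : μH[(d:ℝ)] (P w '' R) = 0 := (mul_eq_zero.1 h0).resolve_left hκ0
  have h2 : R ⊆ (fun x => x + c • w) '' (P w '' R) := by
    intro y hy
    exact ⟨_, ⟨y, hy, rfl⟩, P_add_smul hy.1.2⟩
  refine measure_mono_null h2 ?_
  rw [(isometry_add_right (c • w)).hausdorffMeasure_image (Or.inl (by positivity)), h1]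

lemma cone_height {E : Set (EuclideanSpace ℝ (Fin (d+1)))} {t : ℝ} {y : EuclideanSpace ℝ (Fin (d+1))}
    (hy : ⟪w, y⟫ = c) : ⟪w, (1 - t) • b + t • y⟫ = ⟪w, b⟫ + t * (c - ⟪w, b⟫) := by
  rw [inner_add_right, inner_smul_right, inner_smul_right, hy]; ring

lemma lat_frontier (hw : ‖w‖ = 1) (hb : ⟪w, b⟫ < c) :
    coneOver b (relBoundary {x : EuclideanSpace ℝ (Fin (d+1)) | ⟪w, x⟫ = c}
      (B ∩ {x : EuclideanSpace ℝ (Fin (d+1)) | ⟪w, x⟫ = c})) ⊆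
    frontier (coneOver b (B ∩ {x : EuclideanSpace ℝ (Fin (d+1)) | ⟪w, x⟫ = c})) := by
  rintro _ ⟨t, ht, y, ⟨hyE, hyR⟩, rfl⟩
  have hyH : ⟪w, y⟫ = c := hyE.2
  refine ⟨subset_closure ⟨t, ht, y, hyE, rfl⟩, fun hzI => ?_⟩
  obtain ⟨ε, hε, hball⟩ := Metric.mem_nhds_iff.1 (mem_interior_iff_mem_nhds.1 hzI)
  rcases ht.1.eq_or_lt with h0 | h0
  · have h1 : b - (ε / 2) • w ∈ coneOver b (B ∩ {x : EuclideanSpace ℝ (Fin (d+1)) | ⟪w, x⟫ = c}) := by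
      apply hball
      rw [← h0, mem_ball, dist_eq_norm]
      have : b - (ε / 2) • w - ((1 - (0:ℝ)) • b + (0:ℝ) • y) = -((ε / 2) • w) := by module
      rw [this, norm_neg, norm_smul, hw, Real.norm_eq_abs, abs_of_pos (by positivity)]
      linarith
    obtain ⟨s, hs, u, hu, he⟩ := h1
    have h2 := congrArg (fun z => ⟪w, z⟫) he
    rw [cone_height (E := B) hu.2, inner_sub_right, inner_smul_right, real_inner_self_eq_norm_sq,
      hw] at h2
    have := mul_nonneg hs.1 (sub_nonneg.2 hb.le)
    linarith
  · refine hyR ⟨ε, hε, ?_⟩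
    rintro u ⟨hu, huH⟩
    have h1 : (1 - t) • b + t • u ∈
        coneOver b (B ∩ {x : EuclideanSpace ℝ (Fin (d+1)) | ⟪w, x⟫ = c}) := by
      apply hball
      rw [mem_ball, dist_eq_norm] at hu ⊢
      have : (1 - t) • b + t • u - ((1 - t) • b + t • y) = t • (u - y) := by module
      rw [this, norm_smul, Real.norm_eq_abs, abs_of_pos h0]
      nlinarith [norm_nonneg (u - y), ht.2]
    obtain ⟨s, hs, v, hv, he⟩ := h1
    have h2 := congrArg (fun z => ⟪w, z⟫) he
    rw [cone_height (E := B) hv.2, cone_height (E := B) huH] at h2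
    have hst : t = s := mul_right_cancel₀ (sub_pos.2 hb).ne' (add_left_cancel h2)
    subst hst
    have : u = v := smul_right_injective _ h0.ne' (add_left_cancel he)
    rw [this]; exact hv

lemma cone_compact {E : Set (EuclideanSpace ℝ (Fin (d+1)))} (hE : IsCompact E) :
    IsCompact (coneOver b E) := by
  have : coneOver b E = (fun q : ℝ × EuclideanSpace ℝ (Fin (d+1)) => (1 - q.1) • b + q.1 • q.2) ''
      (Icc (0:ℝ) 1 ×ˢ E) := by
    ext z
    constructor
    · rintro ⟨t, ht, y, hy, rfl⟩
      exact ⟨(t, y), ⟨ht, hy⟩, rfl⟩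
    · rintro ⟨⟨t, y⟩, ⟨ht, hy⟩, rfl⟩
      exact ⟨t, ht, y, hy, rfl⟩
  rw [this]
  exact (isCompact_Icc.prod hE).image (by fun_prop)

lemma not_flat (hw : ‖w‖ = 1) (hb : ⟪w, b⟫ < c) {K : Set (EuclideanSpace ℝ (Fin (d+1)))}
    {x₀ : EuclideanSpace ℝ (Fin (d+1))} (hx₀ : ⟪w, x₀⟫ = c) {ε : ℝ} (hε : 0 < ε)
    (hball : ball x₀ ε ∩ {x : EuclideanSpace ℝ (Fin (d+1)) | ⟪w, x⟫ = c} ⊆ K) (hbK : b ∈ K)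
    (v : EuclideanSpace ℝ (Fin (d+1))) (hv : ‖v‖ = 1)
    (hflat : ∀ y ∈ K, ∀ z ∈ K, ⟪v, y - z⟫ = 0) : False := by
  have hx₀K : x₀ ∈ K := hball ⟨mem_ball_self hε, hx₀⟩
  have h1 : x₀ + (ε / 2) • P w v ∈ K := by
    apply hball
    constructor
    · rw [mem_ball, dist_eq_norm, add_sub_cancel_left, norm_smul, Real.norm_eq_abs,
        abs_of_pos (by positivity)]
      have := norm_P_le hw v
      rw [hv] at this
      nlinarith
    · show ⟪w, x₀ + (ε / 2) • P w v⟫ = c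
      rw [inner_add_right, inner_smul_right, inner_P hw, hx₀]; ring
  have h2 := hflat _ h1 _ hx₀K
  rw [add_sub_cancel_left, inner_smul_right] at h2
  have h3 : ⟪v, P w v⟫ = 0 := (mul_eq_zero.1 h2).resolve_left (by positivity)
  have hdec : v = P w v + ⟪w, v⟫ • w := by simp [P]
  have h4 : ⟪P w v, P w v⟫ = 0 := by
    have h5 : ⟪v, P w v⟫ = ⟪P w v + ⟪w, v⟫ • w, P w v⟫ := by rw [← hdec]
    rw [inner_add_left, real_inner_smul_left, inner_P hw, mul_zero, add_zero] at h5
    rw [← h5, h3]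
  rw [inner_self_eq_zero.1 h4, zero_add] at hdec
  have h6 := hflat _ hx₀K _ hbK
  rw [hdec, real_inner_smul_left, inner_sub_right, hx₀] at h6
  have h7 : ⟪w, v⟫ = 0 := (mul_eq_zero.1 h6).resolve_right (sub_pos.2 hb).ne'
  rw [hdec, h7, zero_smul, norm_zero] at hv
  exact zero_ne_one hv

theorem main_d {Φ : EuclideanSpace ℝ (Fin (d+1)) → ℝ}
    (hΦ0 : ∀ x, 0 ≤ Φ x)
    (hΦhom : ∀ l : ℝ, 0 < l → ∀ x, Φ (l • x) = l * Φ x)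
    (hΦconv : ConvexOn ℝ Set.univ Φ)
    (hBcp : IsCompact B) (hBcv : Convex ℝ B) (hw : ‖w‖ = 1)
    (hcap : ∃ x ∈ B ∩ {x : EuclideanSpace ℝ (Fin (d+1)) | ⟪w, x⟫ = c}, ∃ ε > (0 : ℝ),
      ball x ε ∩ {x : EuclideanSpace ℝ (Fin (d+1)) | ⟪w, x⟫ = c} ⊆ B)
    (hbB : b ∈ B) (hb : ⟪w, b⟫ < c)
    (νC νB : EuclideanSpace ℝ (Fin (d+1)) → EuclideanSpace ℝ (Fin (d+1)))
    (hνC : ∀ᵐ x ∂(μH[(d:ℝ)].restrict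
        (frontier (coneOver b (B ∩ {x : EuclideanSpace ℝ (Fin (d+1)) | ⟪w, x⟫ = c})))),
      IsInnerNormalAt (coneOver b (B ∩ {x : EuclideanSpace ℝ (Fin (d+1)) | ⟪w, x⟫ = c})) x (νC x))
    (hνB : ∀ᵐ x ∂(μH[(d:ℝ)].restrict (frontier B)), IsInnerNormalAt B x (νB x)) :
    ∫⁻ x in coneOver b
        (relBoundary {x : EuclideanSpace ℝ (Fin (d+1)) | ⟪w, x⟫ = c}
          (B ∩ {x : EuclideanSpace ℝ (Fin (d+1)) | ⟪w, x⟫ = c})),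
      ENNReal.ofReal (Φ (νC x)) ∂μH[(d:ℝ)] ≤
    ∫⁻ x in frontier B ∩ {x : EuclideanSpace ℝ (Fin (d+1)) | ⟪w, x⟫ < c},
      ENNReal.ofReal (Φ (νB x)) ∂μH[(d:ℝ)] := by
  have hlat := lat_frontier (B := B) hw hb
  have hnull := relBd_null (B := B) (c := c) hw hBcv
  have hHcl : IsClosed {x : EuclideanSpace ℝ (Fin (d+1)) | ⟪w, x⟫ = c} :=
    isClosed_eq (by fun_prop) continuous_const
  obtain ⟨x₀, hx₀, ε, hε, hball⟩ := hcap
  have hEC : B ∩ {x : EuclideanSpace ℝ (Fin (d+1)) | ⟪w, x⟫ = c} ⊆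
      coneOver b (B ∩ {x : EuclideanSpace ℝ (Fin (d+1)) | ⟪w, x⟫ = c}) := by
    intro y hy
    exact ⟨1, ⟨zero_le_one, le_rfl⟩, y, hy, by simp⟩
  have hCB : coneOver b (B ∩ {x : EuclideanSpace ℝ (Fin (d+1)) | ⟪w, x⟫ = c}) ⊆ B := by
    rintro _ ⟨t, ht, y, hy, rfl⟩
    exact hBcv hbB hy.1 (by linarith [ht.2]) ht.1 (by ring)
  have hbC : b ∈ coneOver b (B ∩ {x : EuclideanSpace ℝ (Fin (d+1)) | ⟪w, x⟫ = c}) :=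
    ⟨0, ⟨le_rfl, zero_le_one⟩, x₀, hx₀, by simp⟩
  obtain ⟨GC, νC', gC, hC1, hC2⟩ := exists_good (cone_compact (hBcp.inter_right hHcl))
    (not_flat hw hb hx₀.2 hε (fun z hz => hEC ⟨hball hz, hz.2⟩) hbC) νC hνC
  obtain ⟨GB, νB', gB, hB1, hB2⟩ := exists_good hBcp (not_flat hw hb hx₀.2 hε hball hbB) νB hνB
  have hS : Setup B (coneOver b (B ∩ {x : EuclideanSpace ℝ (Fin (d+1)) | ⟪w, x⟫ = c}))
      GB GC νB' νC' w c := ⟨hBcp, hBcv, hCB, gB, gC, hB2, fun z hz hc => hEC ⟨hz, hc⟩⟩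
  have hlt : MeasurableSet {x : EuclideanSpace ℝ (Fin (d+1)) | ⟪w, x⟫ < c} :=
    (isOpen_lt (by fun_prop) continuous_const).measurableSet
  set R := relBoundary {x : EuclideanSpace ℝ (Fin (d+1)) | ⟪w, x⟫ = c}
          (B ∩ {x : EuclideanSpace ℝ (Fin (d+1)) | ⟪w, x⟫ = c})
  set C := coneOver b (B ∩ {x : EuclideanSpace ℝ (Fin (d+1)) | ⟪w, x⟫ = c})
  calc ∫⁻ x in coneOver b R, ENNReal.ofReal (Φ (νC x)) ∂μH[(d:ℝ)]
      ≤ ∫⁻ x in GC ∩ {x | ⟪w, x⟫ < c}, ENNReal.ofReal (Φ (νC x)) ∂μH[(d:ℝ)] := by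
        refine lintegral_mono_set' ?_
        have h0 : μH[(d:ℝ)] ((frontier C \ GC) ∪ R) = 0 := measure_union_null hC2 hnull
        refine (measure_eq_zero_iff_ae_notMem.1 h0).mono fun x hx hxl => ?_
        refine ⟨?_, ?_⟩
        · by_contra hcon
          exact hx (Or.inl ⟨hlat hxl, hcon⟩)
        · obtain ⟨t, ht, y, hy, rfl⟩ := hxl
          show ⟪w, (1 - t) • b + t • y⟫ < c
          rw [cone_height (E := B) hy.1.2]
          rcases ht.2.eq_or_lt with h1 | h1
          · refine absurd (Or.inr ?_) hx
            rw [h1]; simpa using hy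
          · nlinarith [sub_pos.2 hb]
    _ = ∫⁻ x in GC ∩ {x | ⟪w, x⟫ < c}, ENNReal.ofReal (Φ (νC' x)) ∂μH[(d:ℝ)] :=
        setLIntegral_congr_fun (gC.meas.inter hlt) (fun x hx => by simp only [hC1 x hx.1])
    _ ≤ ∫⁻ x in GB ∩ {x | ⟪w, x⟫ < c}, ENNReal.ofReal (Φ (νB' x)) ∂μH[(d:ℝ)] :=
        hS.main hΦ0 hΦhom hΦconv
    _ = ∫⁻ x in GB ∩ {x | ⟪w, x⟫ < c}, ENNReal.ofReal (Φ (νB x)) ∂μH[(d:ℝ)] :=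
        setLIntegral_congr_fun (gB.meas.inter hlt) (fun x hx => by simp only [hB1 x hx.1])
    _ ≤ _ := lintegral_mono_set (inter_subset_inter_left _ gB.sub)

end

end ConeCap


/-- Comparison of the lateral `Φ`-perimeter of the cone `𝒞(b, B ∩ ∂H)` with the
`Φ`-perimeter of `∂B` outside the half-space `H` (with inner normal `ν`). -/
theorem cone_lateral_perimeter_le_cap_perimeter
    (n : ℕ) (hn : 2 ≤ n)
    (Φ : EuclideanSpace ℝ (Fin n) → ℝ)
    (hΦ0 : ∀ x, 0 ≤ Φ x)
    (hΦhom : ∀ l : ℝ, 0 < l → ∀ x, Φ (l • x) = l * Φ x)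
    (hΦconv : ConvexOn ℝ Set.univ Φ)
    (B : Set (EuclideanSpace ℝ (Fin n)))
    (hBcp : IsCompact B) (hBcv : Convex ℝ B) (hBint : (interior B).Nonempty)
    (ν : EuclideanSpace ℝ (Fin n)) (hν : ‖ν‖ = 1) (c : ℝ)
    -- `B ∩ ∂H` has nonempty interior relative to the hyperplane `∂H`:
    (hcap : ∃ x ∈ B ∩ {x : EuclideanSpace ℝ (Fin n) | ⟪ν, x⟫ = c}, ∃ ε > (0 : ℝ),
      ball x ε ∩ {x : EuclideanSpace ℝ (Fin n) | ⟪ν, x⟫ = c} ⊆ B)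
    (b : EuclideanSpace ℝ (Fin n)) (hbB : b ∈ B)
    (hbH : b ∉ {x : EuclideanSpace ℝ (Fin n) | ⟪ν, x⟫ ≥ c})
    -- inner unit normal fields of the cone `C = 𝒞(b, B ∩ ∂H)` and of `B`:
    (νC νB : EuclideanSpace ℝ (Fin n) → EuclideanSpace ℝ (Fin n))
    (hνC : ∀ᵐ x ∂(μH[(n : ℝ) - 1].restrict
        (frontier (coneOver b (B ∩ {x : EuclideanSpace ℝ (Fin n) | ⟪ν, x⟫ = c})))),
      IsInnerNormalAt (coneOver b (B ∩ {x : EuclideanSpace ℝ (Fin n) | ⟪ν, x⟫ = c})) x (νC x))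
    (hνB : ∀ᵐ x ∂(μH[(n : ℝ) - 1].restrict (frontier B)), IsInnerNormalAt B x (νB x)) :
    ∫⁻ x in coneOver b
        (relBoundary {x : EuclideanSpace ℝ (Fin n) | ⟪ν, x⟫ = c}
          (B ∩ {x : EuclideanSpace ℝ (Fin n) | ⟪ν, x⟫ = c})),
      ENNReal.ofReal (Φ (νC x)) ∂μH[(n : ℝ) - 1] ≤
    ∫⁻ x in frontier B ∩ {x : EuclideanSpace ℝ (Fin n) | ⟪ν, x⟫ < c},
      ENNReal.ofReal (Φ (νB x)) ∂μH[(n : ℝ) - 1] := by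
  obtain ⟨d, rfl⟩ : ∃ d, n = d + 1 := ⟨n - 1, by omega⟩
  have hd : (((d + 1 : ℕ) : ℝ) - 1) = (d : ℝ) := by push_cast; ring
  rw [hd] at hνC hνB ⊢
  exact ConeCap.main_d hΦ0 hΦhom hΦconv hBcp hBcv hν hcap hbB (not_le.1 hbH) νC νB hνC hνB
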